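/- arXiv:2011.02393 — 5 statements merged into one kernel-verified Lean document; each statement's English description precedes it below -/
import Mathlib

section
/- For every integer w ≥ 3, ∑_{a+b=w, a≥2, b≥1} 2^{a−1} ζ(a,b) = ((w+1)/2)·ζ(w). -/
open Filter

/-- Depth-1 Euler sum `ζ(s; e) = ∑_{n ≥ 1} eⁿ / nˢ`,
defined as the limit of partial sums. `e = 1` gives `ζ(s)`, `e = -1` gives `ζ(s̄)`. -/
noncomputable def eulerSum1 (s : ℕ) (e : ℝ) : ℝ :=
  limUnder atTop (fun N : ℕ =>
    ∑ n ∈ Finset.Icc 1 N, e ^ n / (n : ℝ) ^ s)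

/-- Depth-2 Euler sum `ζ(s₁, s₂; e₁, e₂) = ∑_{n₁ > n₂ ≥ 1} e₁^{n₁} e₂^{n₂} / (n₁^{s₁} n₂^{s₂})`,
defined as the limit of iterated partial sums. A bar over an argument means the
corresponding sign is `-1`. -/
noncomputable def eulerSum2 (s₁ s₂ : ℕ) (e₁ e₂ : ℝ) : ℝ :=
  limUnder atTop (fun N : ℕ =>
    ∑ n₁ ∈ Finset.Icc 1 N, ∑ n₂ ∈ Finset.Ico 1 n₁,
      e₁ ^ n₁ * e₂ ^ n₂ / ((n₁ : ℝ) ^ s₁ * (n₂ : ℝ) ^ s₂))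

/-- Depth-3 Euler sum
`ζ(s₁, s₂, s₃; e₁, e₂, e₃) = ∑_{n₁ > n₂ > n₃ ≥ 1} e₁^{n₁} e₂^{n₂} e₃^{n₃} / (n₁^{s₁} n₂^{s₂} n₃^{s₃})`. -/
noncomputable def eulerSum3 (s₁ s₂ s₃ : ℕ) (e₁ e₂ e₃ : ℝ) : ℝ :=
  limUnder atTop (fun N : ℕ =>
    ∑ n₁ ∈ Finset.Icc 1 N, ∑ n₂ ∈ Finset.Ico 1 n₁, ∑ n₃ ∈ Finset.Ico 1 n₂,
      e₁ ^ n₁ * e₂ ^ n₂ * e₃ ^ n₃ / ((n₁ : ℝ) ^ s₁ * (n₂ : ℝ) ^ s₂ * (n₃ : ℝ) ^ s₃))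

/-- Depth-1 multiple T-value `T(s) = 2 ∑_{m odd, m ≥ 1} 1 / mˢ`. -/
noncomputable def tValue1 (s : ℕ) : ℝ :=
  limUnder atTop (fun N : ℕ =>
    ∑ m ∈ Finset.Icc 1 N, if m % 2 = 1 then 2 / (m : ℝ) ^ s else 0)

/-- Depth-2 multiple T-value
`T(s₁, s₂) = ∑_{m₁ > m₂ > 0, m₁ even, m₂ odd} 4 / (m₁^{s₁} m₂^{s₂})`. -/
noncomputable def tValue2 (s₁ s₂ : ℕ) : ℝ :=
  limUnder atTop (fun N : ℕ =>
    ∑ m₁ ∈ Finset.Icc 1 N, ∑ m₂ ∈ Finset.Ico 1 m₁,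
      if m₁ % 2 = 0 ∧ m₂ % 2 = 1 then 4 / ((m₁ : ℝ) ^ s₁ * (m₂ : ℝ) ^ s₂) else 0)

/-- Depth-3 multiple T-value
`T(s₁, s₂, s₃) = ∑_{m₁ > m₂ > m₃ > 0, m₁ odd, m₂ even, m₃ odd} 8 / (m₁^{s₁} m₂^{s₂} m₃^{s₃})`. -/
noncomputable def tValue3 (s₁ s₂ s₃ : ℕ) : ℝ :=
  limUnder atTop (fun N : ℕ =>
    ∑ m₁ ∈ Finset.Icc 1 N, ∑ m₂ ∈ Finset.Ico 1 m₁, ∑ m₃ ∈ Finset.Ico 1 m₂,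
      if m₁ % 2 = 1 ∧ m₂ % 2 = 0 ∧ m₃ % 2 = 1 then
        8 / ((m₁ : ℝ) ^ s₁ * (m₂ : ℝ) ^ s₂ * (m₃ : ℝ) ^ s₃) else 0)

/-!
Multiplying `1 / (mʳ nˢ (m + n)ᵗ)` by `(m + n) / (m + n)` shows that Tornheim's double series
satisfies `T(r, s, t) = T(r - 1, s, t + 1) + T(r, s - 1, t + 1)`, while `ζ(a, b) = T(b, 0, a)` and
`ζ(r) ζ(s) = T(r, s, 0)`. Summed over `r + s = w - 1`, the relation reproduces the same sum twice,
with `t` increased, plus a boundary term; iterating from `t = 1` turns the doubling into the weights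
`2^(a - 1)`, so the weighted sum is `S = ∑_{r + s = w - 1} T(r, s, 1)`. Starting instead from
`t = 0`, the relation gives `2 S = 2 T(w - 2, 1, 1) + ∑_{r + s = w, r, s ≥ 2} ζ(r) ζ(s)`.
Telescoping `1 / (n (m + n))` over `n` yields `T(w - 2, 1, 1) = ζ(w) + ζ(w - 1, 1)`, and unrolling
the relation from this series yields Euler's `∑ ζ(a, b) = ζ(w)`. The stuffle product
`ζ(r) ζ(s) = ζ(r, s) + ζ(s, r) + ζ(w)` then evaluates `2 S`.

All series involved converge absolutely, so the divergent `ζ(1)` is never regularised.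
-/

section

open Finset
open scoped Topology

section Series

variable {M : Type*} [AddCommMonoid M] [TopologicalSpace M]

lemma tendsto_sum_Icc_of_hasSum_pnat {f : ℕ → M} {a : M} (hf : HasSum (fun n : ℕ+ => f n) a) :
    Tendsto (fun N : ℕ => ∑ n ∈ Icc 1 N, f n) atTop (𝓝 a) := by
  have hsucc : HasSum (fun k : ℕ => f (k + 1)) a :=
    (Equiv.hasSum_iff Equiv.pnatEquivNat.symm).mpr hf
  refine hsucc.tendsto_sum_nat.congr fun N => ?_
  rw [range_eq_Ico, sum_Ico_add' f, zero_add, Ico_add_one_right_eq_Icc]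

lemma hasSum_sum_Ico_of_hasSum_add [ContinuousAdd M] [RegularSpace M] {g : ℕ → ℕ → M} {a : M}
    (hg : HasSum (fun x : ℕ+ × ℕ+ => g (x.1 + x.2) x.1) a) :
    HasSum (fun p : ℕ+ => ∑ q ∈ Ico 1 (p : ℕ), g p q) a := by
  have hinj : Function.Injective fun x : ℕ+ × ℕ+ => (x.1 + x.2, x.1) := by
    rintro ⟨m, n⟩ ⟨m', n'⟩ h
    obtain ⟨hadd, rfl⟩ : m + n = m' + n' ∧ m = m' := Prod.mk.inj h
    rw [add_left_cancel hadd]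
  have hlower : HasSum (fun y : ℕ+ × ℕ+ => if y.2 < y.1 then g y.1 y.2 else 0) a := by
    refine (hinj.hasSum_iff fun y hy => if_neg fun hlt => hy ?_).mp ?_
    · exact ⟨(y.2, y.1 - y.2), Prod.ext (PNat.add_sub_of_lt hlt) rfl⟩
    · simpa [Function.comp_def, PNat.lt_add_right] using hg
  refine hlower.prod_fiberwise fun p => ?_
  have hrow : ∑ q ∈ Ico 1 (p : ℕ), g p q = ∑ q ∈ Ico 1 p, if q < p then g p q else 0 := by
    rw [sum_congr rfl fun q hq => if_pos (mem_Ico.mp hq).2, ← PNat.one_coe,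
      ← PNat.map_subtype_embedding_Ico]
    exact sum_map _ _ _
  rw [hrow]
  exact hasSum_sum_of_ne_finset_zero fun q hq =>
    if_neg fun hlt => hq (mem_Ico.mpr ⟨one_le, hlt⟩)

end Series

lemma hasSum_sub_add_of_tendsto_zero {f : ℕ → ℝ} (hf : Antitone f) (hlim : Tendsto f atTop (𝓝 0))
    (m : ℕ) : HasSum (fun n => f n - f (n + m)) (∑ k ∈ range m, f k) := by
  rw [hasSum_iff_tendsto_nat_of_nonneg fun n => sub_nonneg.mpr (hf (Nat.le_add_right n m))]
  have htail : Tendsto (fun N => ∑ k ∈ range m, f (N + k)) atTop (𝓝 0) := by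
    simpa using tendsto_finsetSum (range m) fun k _ => hlim.comp (tendsto_add_atTop_nat k)
  have hpartial (N : ℕ) :
      ∑ k ∈ range m, f k - ∑ k ∈ range m, f (N + k) = ∑ n ∈ range N, (f n - f (n + m)) := by
    have hsplit : ∑ k ∈ range m, f k + ∑ n ∈ range N, f (m + n) =
        ∑ n ∈ range N, f n + ∑ k ∈ range m, f (N + k) := by
      rw [← sum_range_add, ← sum_range_add, add_comm]
    rw [sum_sub_distrib]
    simp only [add_comm _ m]
    linarith
  simpa [hpartial] using htail.const_sub (∑ k ∈ range m, f k)

lemma hasSum_inv_sub_inv_add (m : ℕ) :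
    HasSum (fun n : ℕ+ => (n : ℝ)⁻¹ - ((m : ℝ) + n)⁻¹) (∑ k ∈ Icc 1 m, (k : ℝ)⁻¹) := by
  have hanti : Antitone fun n : ℕ => ((n : ℝ) + 1)⁻¹ := fun a b hab => by
    dsimp only
    gcongr
  have hlim : Tendsto (fun n : ℕ => ((n : ℝ) + 1)⁻¹) atTop (𝓝 0) := by
    simpa using tendsto_one_div_add_atTop_nhds_zero_nat (𝕜 := ℝ)
  have hsum : ∑ k ∈ Icc 1 m, (k : ℝ)⁻¹ = ∑ k ∈ range m, ((k : ℝ) + 1)⁻¹ := by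
    rw [range_eq_Ico, ← Ico_add_one_right_eq_Icc, ← sum_Ico_add' _ 0 m 1]
    simp
  rw [hsum, ← Equiv.hasSum_iff Equiv.pnatEquivNat.symm]
  convert hasSum_sub_add_of_tendsto_zero hanti hlim m using 2 with n
  simp only [Function.comp_apply, Equiv.pnatEquivNat_symm_apply, Nat.succPNat_coe,
    Nat.succ_eq_add_one]
  push_cast
  ring

lemma sum_Icc_mul_sum_Icc {R : Type*} [CommSemiring R] (f g : ℕ → R) (N : ℕ) :
    (∑ p ∈ Icc 1 N, f p) * ∑ p ∈ Icc 1 N, g p =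
      ∑ p ∈ Icc 1 N, ∑ q ∈ Ico 1 p, f p * g q + ∑ p ∈ Icc 1 N, ∑ q ∈ Ico 1 p, g p * f q +
        ∑ p ∈ Icc 1 N, f p * g p := by
  induction N with
  | zero => simp
  | succ N ih =>
    simp only [sum_Icc_succ_top (Nat.le_add_left 1 N), add_mul, mul_add, ih, ← mul_sum,
      Ico_add_one_right_eq_Icc]
    ring

/-- The summand `1 / (mʳ nˢ (m + n)ᵗ)` of Tornheim's double series, at `x = (m, n)`. -/
noncomputable def tornheimTerm (r s t : ℕ) (x : ℕ+ × ℕ+) : ℝ :=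
  ((x.1 : ℝ) ^ r * (x.2 : ℝ) ^ s * ((x.1 : ℝ) + x.2) ^ t)⁻¹

/-- Tornheim's double series `T(r, s, t) = ∑_{m, n ≥ 1} 1 / (mʳ nˢ (m + n)ᵗ)`, which contains both
the double zeta values `ζ(a, b) = T(b, 0, a)` and the products `ζ(r) ζ(s) = T(r, s, 0)`. -/
noncomputable def tornheimSum (r s t : ℕ) : ℝ :=
  ∑' x, tornheimTerm r s t x

lemma tornheimTerm_nonneg (r s t : ℕ) (x : ℕ+ × ℕ+) : 0 ≤ tornheimTerm r s t x := by
  unfold tornheimTerm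
  positivity

lemma tornheimTerm_le_sqrt {r s t : ℕ} (hrt : 2 ≤ r + t) (hst : 2 ≤ s + t) (hrst : 3 ≤ r + s + t)
    (x : ℕ+ × ℕ+) :
    tornheimTerm r s t x ≤ √((x.1 : ℝ) ^ 3)⁻¹ * √((x.2 : ℝ) ^ 3)⁻¹ := by
  obtain ⟨m, n⟩ := x
  have hm : (1 : ℝ) ≤ m := by exact_mod_cast one_le (a := m)
  have hn : (1 : ℝ) ≤ n := by exact_mod_cast one_le (a := n)
  -- With truncated subtraction, `(3 - 2r) + (3 - 2s) ≤ 2t` in every case.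
  have hden : (m : ℝ) ^ 3 * (n : ℝ) ^ 3 ≤ ((m : ℝ) ^ r * (n : ℝ) ^ s * ((m : ℝ) + n) ^ t) ^ 2 :=
    calc (m : ℝ) ^ 3 * (n : ℝ) ^ 3
        ≤ (m : ℝ) ^ (2 * r + (3 - 2 * r)) * (n : ℝ) ^ (2 * s + (3 - 2 * s)) := by
          gcongr <;> first | assumption | omega
      _ = (m : ℝ) ^ (2 * r) * (n : ℝ) ^ (2 * s) *
            ((m : ℝ) ^ (3 - 2 * r) * (n : ℝ) ^ (3 - 2 * s)) := by
          ring
      _ ≤ (m : ℝ) ^ (2 * r) * (n : ℝ) ^ (2 * s) *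
            (((m : ℝ) + n) ^ (3 - 2 * r) * ((m : ℝ) + n) ^ (3 - 2 * s)) := by
          gcongr <;> linarith
      _ ≤ (m : ℝ) ^ (2 * r) * (n : ℝ) ^ (2 * s) * ((m : ℝ) + n) ^ (2 * t) := by
          rw [← pow_add]
          gcongr
          · linarith
          · omega
      _ = _ := by ring
  rw [← Real.sqrt_mul (by positivity), ← mul_inv]
  refine Real.le_sqrt_of_sq_le ?_
  rw [tornheimTerm, inv_pow]
  gcongr

lemma summable_sqrt_pow_three_inv : Summable fun n : ℕ+ => √((n : ℝ) ^ 3)⁻¹ := by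
  have h : Summable fun n : ℕ => √((n : ℝ) ^ 3)⁻¹ := by
    refine (Real.summable_nat_rpow_inv.mpr (by norm_num : (1 : ℝ) < 3 / 2)).congr fun n => ?_
    rw [Real.sqrt_inv, Real.sqrt_eq_rpow, ← Real.rpow_natCast_mul n.cast_nonneg]
    norm_num
  exact h.comp_injective PNat.coe_injective

lemma summable_tornheimTerm {r s t : ℕ} (hrt : 2 ≤ r + t) (hst : 2 ≤ s + t)
    (hrst : 3 ≤ r + s + t) : Summable (tornheimTerm r s t) :=
  .of_nonneg_of_le (tornheimTerm_nonneg r s t) (tornheimTerm_le_sqrt hrt hst hrst) <|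
    summable_sqrt_pow_three_inv.mul_of_nonneg summable_sqrt_pow_three_inv
      (fun _ => Real.sqrt_nonneg _) fun _ => Real.sqrt_nonneg _

lemma tornheimSum_comm (r s t : ℕ) : tornheimSum r s t = tornheimSum s r t := by
  rw [tornheimSum, ← (Equiv.prodComm ℕ+ ℕ+).tsum_eq]
  refine tsum_congr fun x => ?_
  simp only [tornheimTerm, Equiv.prodComm_apply, Prod.fst_swap, Prod.snd_swap]
  ring

lemma tornheimSum_succ_succ {r s t : ℕ} (hrt : 1 ≤ r + t) (hst : 1 ≤ s + t) :
    tornheimSum (r + 1) (s + 1) t =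
      tornheimSum r (s + 1) (t + 1) + tornheimSum (r + 1) s (t + 1) := by
  unfold tornheimSum
  rw [← (summable_tornheimTerm (by omega) (by omega) (by omega)).tsum_add
    (summable_tornheimTerm (by omega) (by omega) (by omega))]
  refine tsum_congr fun x => ?_
  unfold tornheimTerm
  field_simp
  ring

lemma sum_tornheimSum_succ_succ (n : ℕ) {t : ℕ} (ht : 1 ≤ t) :
    ∑ p ∈ antidiagonal n, tornheimSum (p.1 + 1) (p.2 + 1) t =
      ∑ p ∈ antidiagonal n, 2 ^ (p.1 + 1) * tornheimSum (p.2 + 1) 0 (t + p.1 + 1) := by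
  induction n generalizing t with
  | zero =>
    simp only [Finset.HasAntidiagonal.antidiagonal_zero, sum_singleton, add_zero]
    rw [tornheimSum_succ_succ (by omega) (by omega), tornheimSum_comm 0]
    ring
  | succ n ih =>
    have hsplit (p : ℕ × ℕ) : tornheimSum (p.1 + 1) (p.2 + 1) t =
        tornheimSum p.1 (p.2 + 1) (t + 1) + tornheimSum (p.1 + 1) p.2 (t + 1) :=
      tornheimSum_succ_succ (by omega) (by omega)
    simp only [hsplit, sum_add_distrib]
    rw [Finset.Nat.sum_antidiagonal_succ, Finset.Nat.sum_antidiagonal_succ',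
      Finset.Nat.sum_antidiagonal_succ, ih (Nat.le_add_left 1 t), tornheimSum_comm 0]
    have hshift (p : ℕ × ℕ) :
        (2 : ℝ) ^ (p.1 + 1 + 1) * tornheimSum (p.2 + 1) 0 (t + (p.1 + 1) + 1) =
          2 * (2 ^ (p.1 + 1) * tornheimSum (p.2 + 1) 0 (t + 1 + p.1 + 1)) := by
      rw [show t + (p.1 + 1) + 1 = t + 1 + p.1 + 1 by omega]
      ring
    simp only [hshift, ← mul_sum, zero_add, add_zero, pow_one]
    ring

lemma tornheimSum_succ_one (n : ℕ) {t : ℕ} (ht : 1 ≤ t) :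
    tornheimSum (n + 1) 1 t =
      tornheimSum 1 0 (t + n + 1) +
        ∑ p ∈ antidiagonal n, tornheimSum (p.2 + 1) 0 (t + p.1 + 1) := by
  induction n generalizing t with
  | zero =>
    simp [tornheimSum_succ_succ (r := 0) (s := 0) (t := t) (by omega) (by omega),
      tornheimSum_comm 0 1]
  | succ n ih =>
    rw [tornheimSum_succ_succ (by omega) (by omega), ih (Nat.le_add_left 1 t),
      Finset.Nat.sum_antidiagonal_succ]
    ring_nf

lemma summable_pnat_pow_inv {s : ℕ} (hs : 2 ≤ s) : Summable fun n : ℕ+ => ((n : ℝ) ^ s)⁻¹ :=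
  (Real.summable_nat_pow_inv.mpr hs).comp_injective PNat.coe_injective

lemma hasSum_eulerSum1 {s : ℕ} (hs : 2 ≤ s) :
    HasSum (fun n : ℕ+ => ((n : ℝ) ^ s)⁻¹) (eulerSum1 s 1) := by
  have h := (summable_pnat_pow_inv hs).hasSum
  have hlim : eulerSum1 s 1 = ∑' n : ℕ+, ((n : ℝ) ^ s)⁻¹ := by
    simpa [eulerSum1] using
      (tendsto_sum_Icc_of_hasSum_pnat (f := fun n => ((n : ℝ) ^ s)⁻¹) h).limUnder_eq
  rwa [hlim]

lemma hasSum_sum_Ico_tornheimSum {a b : ℕ} (ha : 2 ≤ a) (hb : 1 ≤ b) :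
    HasSum (fun p : ℕ+ => ∑ q ∈ Ico 1 (p : ℕ), ((p : ℝ) ^ a * (q : ℝ) ^ b)⁻¹)
      (tornheimSum b 0 a) := by
  refine hasSum_sum_Ico_of_hasSum_add (g := fun p q => ((p : ℝ) ^ a * (q : ℝ) ^ b)⁻¹) ?_
  convert (summable_tornheimTerm (r := b) (s := 0) (t := a) (by omega) (by omega) (by omega)).hasSum
    using 2 with x
  · simp [tornheimTerm, mul_comm]
  · rfl

lemma eulerSum2_eq_tornheimSum {a b : ℕ} (ha : 2 ≤ a) (hb : 1 ≤ b) :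
    eulerSum2 a b 1 1 = tornheimSum b 0 a := by
  simpa [eulerSum2] using (tendsto_sum_Icc_of_hasSum_pnat
    (f := fun p => ∑ q ∈ Ico 1 p, ((p : ℝ) ^ a * (q : ℝ) ^ b)⁻¹)
    (hasSum_sum_Ico_tornheimSum ha hb)).limUnder_eq

lemma tendsto_sum_Icc_eulerSum1 {s : ℕ} (hs : 2 ≤ s) :
    Tendsto (fun N : ℕ => ∑ n ∈ Icc 1 N, ((n : ℝ) ^ s)⁻¹) atTop (𝓝 (eulerSum1 s 1)) :=
  tendsto_sum_Icc_of_hasSum_pnat (hasSum_eulerSum1 hs)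

lemma hasSum_sum_Ico_eulerSum2 {a b : ℕ} (ha : 2 ≤ a) (hb : 1 ≤ b) :
    HasSum (fun p : ℕ+ => ∑ q ∈ Ico 1 (p : ℕ), ((p : ℝ) ^ a * (q : ℝ) ^ b)⁻¹)
      (eulerSum2 a b 1 1) :=
  eulerSum2_eq_tornheimSum ha hb ▸ hasSum_sum_Ico_tornheimSum ha hb

lemma tendsto_sum_Icc_eulerSum2 {a b : ℕ} (ha : 2 ≤ a) (hb : 1 ≤ b) :
    Tendsto (fun N : ℕ => ∑ p ∈ Icc 1 N, ∑ q ∈ Ico 1 p, ((p : ℝ) ^ a * (q : ℝ) ^ b)⁻¹) atTop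
      (𝓝 (eulerSum2 a b 1 1)) :=
  tendsto_sum_Icc_of_hasSum_pnat (hasSum_sum_Ico_eulerSum2 ha hb)

lemma tornheimSum_zero_right {r s : ℕ} (hr : 2 ≤ r) (hs : 2 ≤ s) :
    tornheimSum r s 0 = eulerSum1 r 1 * eulerSum1 s 1 := by
  have hprod := (summable_pnat_pow_inv hr).mul_of_nonneg (summable_pnat_pow_inv hs)
    (fun _ => by positivity) fun _ => by positivity
  rw [← (hasSum_eulerSum1 hr).tsum_eq, ← (hasSum_eulerSum1 hs).tsum_eq,
    (summable_pnat_pow_inv hr).tsum_mul_tsum (summable_pnat_pow_inv hs) hprod]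
  exact tsum_congr fun x => by simp [tornheimTerm, mul_comm]

lemma eulerSum1_mul_eulerSum1 {r s : ℕ} (hr : 2 ≤ r) (hs : 2 ≤ s) :
    eulerSum1 r 1 * eulerSum1 s 1 =
      eulerSum2 r s 1 1 + eulerSum2 s r 1 1 + eulerSum1 (r + s) 1 := by
  have hprod := (tendsto_sum_Icc_eulerSum1 hr).mul (tendsto_sum_Icc_eulerSum1 hs)
  have hstuffle := ((tendsto_sum_Icc_eulerSum2 hr (one_le_two.trans hs)).add
    (tendsto_sum_Icc_eulerSum2 hs (one_le_two.trans hr))).add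
      (tendsto_sum_Icc_eulerSum1 (hr.trans (Nat.le_add_right r s)))
  refine tendsto_nhds_unique (hprod.congr fun N => ?_) hstuffle
  simp only [sum_Icc_mul_sum_Icc, mul_inv, pow_add]

lemma tornheimSum_one_one {s : ℕ} (hs : 1 ≤ s) :
    tornheimSum s 1 1 = eulerSum1 (s + 2) 1 + eulerSum2 (s + 1) 1 1 1 := by
  have hrow (m : ℕ+) : HasSum (fun n : ℕ+ => tornheimTerm s 1 1 (m, n))
      (((m : ℝ) ^ (s + 1))⁻¹ * ∑ k ∈ Icc 1 (m : ℕ), (k : ℝ)⁻¹) := by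
    refine ((hasSum_inv_sub_inv_add m).mul_left _).congr_fun fun n => ?_
    unfold tornheimTerm
    field_simp
    ring
  have hleft := (summable_tornheimTerm (r := s) (s := 1) (t := 1) (by omega) (by omega)
    (by omega)).hasSum.prod_fiberwise hrow
  have hright := (hasSum_eulerSum1 (s := s + 2) (by omega)).add
    (hasSum_sum_Ico_eulerSum2 (a := s + 1) (b := 1) (by omega) le_rfl)
  refine hleft.unique (hright.congr_fun fun m => ?_)
  rw [← sum_Ico_add_eq_sum_Icc (show 1 ≤ (m : ℕ) from m.pos), mul_add, mul_sum]
  simp only [mul_inv, pow_one]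
  ring

lemma sum_two_pow_mul_eulerSum2 (n : ℕ) :
    ∑ p ∈ antidiagonal n, 2 ^ (p.1 + 1) * eulerSum2 (p.1 + 2) (p.2 + 1) 1 1 =
      ∑ p ∈ antidiagonal n, tornheimSum (p.1 + 1) (p.2 + 1) 1 := by
  rw [sum_tornheimSum_succ_succ n le_rfl]
  refine sum_congr rfl fun p _ => ?_
  rw [eulerSum2_eq_tornheimSum (Nat.le_add_left 2 _) (Nat.le_add_left 1 _),
    show 1 + p.1 + 1 = p.1 + 2 by omega]

lemma sum_eulerSum2_eq_eulerSum1 (n : ℕ) :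
    ∑ p ∈ antidiagonal n, eulerSum2 (p.1 + 2) (p.2 + 1) 1 1 = eulerSum1 (n + 3) 1 := by
  have hsum : ∑ p ∈ antidiagonal n, eulerSum2 (p.1 + 2) (p.2 + 1) 1 1 =
      ∑ p ∈ antidiagonal n, tornheimSum (p.2 + 1) 0 (1 + p.1 + 1) :=
    sum_congr rfl fun p _ => by
      rw [eulerSum2_eq_tornheimSum (Nat.le_add_left 2 _) (Nat.le_add_left 1 _),
        show 1 + p.1 + 1 = p.1 + 2 by omega]
  have hunroll := tornheimSum_succ_one n le_rfl
  rw [← hsum, tornheimSum_one_one (Nat.le_add_left 1 n), show 1 + n + 1 = n + 2 by omega,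
    ← eulerSum2_eq_tornheimSum (Nat.le_add_left 2 n) le_rfl] at hunroll
  linarith

lemma sum_eulerSum1_mul_eulerSum1 (n : ℕ) :
    ∑ p ∈ antidiagonal n, eulerSum1 (p.1 + 2) 1 * eulerSum1 (p.2 + 2) 1 =
      (n + 3) * eulerSum1 (n + 4) 1 - 2 * eulerSum2 (n + 3) 1 1 1 := by
  have hstuffle : ∀ p ∈ antidiagonal n, eulerSum1 (p.1 + 2) 1 * eulerSum1 (p.2 + 2) 1 =
      eulerSum2 (p.1 + 2) (p.2 + 2) 1 1 + eulerSum2 (p.2 + 2) (p.1 + 2) 1 1 +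
        eulerSum1 (n + 4) 1 := fun p hp => by
    rw [eulerSum1_mul_eulerSum1 (Nat.le_add_left 2 _) (Nat.le_add_left 2 _),
      show p.1 + 2 + (p.2 + 2) = n + 4 by have := mem_antidiagonal.mp hp; omega]
  have hswap : ∑ p ∈ antidiagonal n, eulerSum2 (p.2 + 2) (p.1 + 2) 1 1 =
      ∑ p ∈ antidiagonal n, eulerSum2 (p.1 + 2) (p.2 + 2) 1 1 :=
    Finset.Nat.sum_antidiagonal_swap (f := fun p => eulerSum2 (p.1 + 2) (p.2 + 2) 1 1)
  have heuler := sum_eulerSum2_eq_eulerSum1 (n + 1)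
  rw [Finset.Nat.sum_antidiagonal_succ'] at heuler
  rw [sum_congr rfl hstuffle, sum_add_distrib, sum_add_distrib, hswap, sum_const,
    Finset.Nat.card_antidiagonal, nsmul_eq_mul]
  push_cast
  linarith

lemma two_mul_sum_tornheimSum_one (n : ℕ) :
    2 * ∑ p ∈ antidiagonal (n + 1), tornheimSum (p.1 + 1) (p.2 + 1) 1 =
      2 * tornheimSum (n + 2) 1 1 +
        ∑ p ∈ antidiagonal n, eulerSum1 (p.1 + 2) 1 * eulerSum1 (p.2 + 2) 1 := by
  have hprod (p : ℕ × ℕ) : eulerSum1 (p.1 + 2) 1 * eulerSum1 (p.2 + 2) 1 =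
      tornheimSum (p.1 + 1) (p.2 + 2) 1 + tornheimSum (p.1 + 2) (p.2 + 1) 1 := by
    rw [← tornheimSum_zero_right (Nat.le_add_left 2 _) (Nat.le_add_left 2 _),
      tornheimSum_succ_succ (r := p.1 + 1) (by omega) (by omega)]
  have hfirst := Finset.Nat.sum_antidiagonal_succ (n := n)
    (f := fun p => tornheimSum (p.1 + 1) (p.2 + 1) 1)
  have hlast := Finset.Nat.sum_antidiagonal_succ' (n := n)
    (f := fun p => tornheimSum (p.1 + 1) (p.2 + 1) 1)
  simp only [hprod, sum_add_distrib]
  rw [tornheimSum_comm] at hfirst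
  dsimp only at hfirst hlast
  linarith

lemma sum_tornheimSum_one (n : ℕ) :
    ∑ p ∈ antidiagonal n, tornheimSum (p.1 + 1) (p.2 + 1) 1 =
      ((n : ℝ) + 4) / 2 * eulerSum1 (n + 3) 1 := by
  obtain _ | n := n
  · have heuler := sum_eulerSum2_eq_eulerSum1 0
    simp only [Finset.HasAntidiagonal.antidiagonal_zero, sum_singleton] at heuler ⊢
    rw [tornheimSum_one_one le_rfl, heuler]
    push_cast
    ring
  · have h := two_mul_sum_tornheimSum_one n
    rw [tornheimSum_one_one (Nat.le_add_left 1 _), sum_eulerSum1_mul_eulerSum1] at h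
    push_cast
    linarith

lemma sum_Icc_two_eq_sum_antidiagonal {M : Type*} [AddCommMonoid M] (F : ℕ → ℕ → M) (n : ℕ) :
    ∑ a ∈ Icc 2 (n + 2), F a (n + 3 - a) = ∑ p ∈ antidiagonal n, F (p.1 + 2) (p.2 + 1) := by
  rw [Finset.Nat.sum_antidiagonal_eq_sum_range_succ fun k l => F (k + 2) (l + 1),
    ← Ico_add_one_right_eq_Icc, sum_Ico_eq_sum_range]
  refine sum_congr rfl fun k hk => ?_
  have := mem_range.mp hk
  congr 1 <;> omega

end

/-- For `w ≥ 3`: `∑_{a+b=w, a≥2} 2^{a−1} ζ(a,b) = ((w+1)/2) ζ(w)`. -/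
theorem weighted_sum_double_zeta (w : ℕ) (hw : 3 ≤ w) :
    ∑ a ∈ Finset.Icc 2 (w - 1), (2 : ℝ) ^ (a - 1) * eulerSum2 a (w - a) 1 1
      = ((w : ℝ) + 1) / 2 * eulerSum1 w 1 := by
  obtain ⟨n, rfl⟩ : ∃ n, w = n + 3 := ⟨w - 3, by omega⟩
  calc ∑ a ∈ Finset.Icc 2 (n + 2), (2 : ℝ) ^ (a - 1) * eulerSum2 a (n + 3 - a) 1 1
      = ∑ p ∈ Finset.HasAntidiagonal.antidiagonal n,
          2 ^ (p.1 + 1) * eulerSum2 (p.1 + 2) (p.2 + 1) 1 1 :=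
        sum_Icc_two_eq_sum_antidiagonal (fun a b => 2 ^ (a - 1) * eulerSum2 a b 1 1) n
    _ = ∑ p ∈ Finset.HasAntidiagonal.antidiagonal n, tornheimSum (p.1 + 1) (p.2 + 1) 1 :=
        sum_two_pow_mul_eulerSum2 n
    _ = ((n : ℝ) + 4) / 2 * eulerSum1 (n + 3) 1 := sum_tornheimSum_one n
    _ = (((n + 3 : ℕ) : ℝ) + 1) / 2 * eulerSum1 (n + 3) 1 := by
        push_cast
        ring
end

section
/- For every integer w ≥ 3, ∑_{a+b=w, a≥2, b≥1} 2^{a−1} ζ(ā,b) = ζ(w̄) + ((w−1)/2)·ζ(w). -/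
open Filter

open Topology

/-
Summed over `a`, the geometric progression `2^(a-1) / (n^a m^(w-a))` equals
`(2/n)^(w-1) / (2m - n) + m^(1-w) (1/(n - 2m) - 1/n)` off the diagonal `n = 2m`. The first term is
odd under `m ↦ n - m` and disappears from the sum over `m < n`. In the second, the sums over `n > m`
of `(-1)^n/(n - 2m)` and of `(-1)^n/n` run over windows of the odd function `j ↦ (-1)^j/j` on `ℤ`;
they start at `1 - m` and at `1 + m`, so after cancelling `j` against `-j` they differ by the single
term `(-1)^m/m`, which yields `ζ(w̄)`. The diagonal contributes the multiple of `ζ(w)`. Carried out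
for truncations at `n ≤ N`, this leaves an error that vanishes as `N → ∞`.
-/

namespace WeightedEulerSum

/-- The truncation at `n ≤ N` of the depth-1 Euler sum `ζ(s; e)`. -/
noncomputable def partialEulerSum1 (s : ℕ) (e : ℝ) (N : ℕ) : ℝ :=
  ∑ n ∈ Finset.Icc 1 N, e ^ n / (n : ℝ) ^ s

/-- The truncation at `n₁ ≤ N` of the depth-2 Euler sum `ζ(s₁, s₂; e₁, e₂)`. -/
noncomputable def partialEulerSum2 (s₁ s₂ : ℕ) (e₁ e₂ : ℝ) (N : ℕ) : ℝ :=
  ∑ n₁ ∈ Finset.Icc 1 N, ∑ n₂ ∈ Finset.Ico 1 n₁,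
    e₁ ^ n₁ * e₂ ^ n₂ / ((n₁ : ℝ) ^ s₁ * (n₂ : ℝ) ^ s₂)

section Convergence

lemma tendsto_limUnder_sum_Icc_one {E : Type*} [AddCommGroup E] [TopologicalSpace E]
    [IsTopologicalAddGroup E] {f : ℕ → E} (hf : Summable f) :
    Tendsto (fun N : ℕ => ∑ n ∈ Finset.Icc 1 N, f n) atTop
      (𝓝 (limUnder atTop fun N : ℕ => ∑ n ∈ Finset.Icc 1 N, f n)) := by
  refine tendsto_nhds_limUnder ⟨∑' n, f (n + 1), ?_⟩
  refine ((summable_nat_add_iff 1).mpr hf).hasSum.tendsto_sum_nat.congr fun N => ?_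
  rw [Finset.range_eq_Ico, Finset.sum_Ico_add', zero_add, Finset.Ico_add_one_right_eq_Icc]

lemma tendsto_partialEulerSum1 {s : ℕ} (hs : 2 ≤ s) {e : ℝ} (he : |e| ≤ 1) :
    Tendsto (partialEulerSum1 s e) atTop (𝓝 (eulerSum1 s e)) := by
  refine tendsto_limUnder_sum_Icc_one
    (.of_norm_bounded (Real.summable_one_div_nat_pow.mpr hs) fun n => ?_)
  rw [norm_div, norm_pow, norm_pow, Real.norm_natCast, Real.norm_eq_abs]
  gcongr
  exact pow_le_one₀ (abs_nonneg e) he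

lemma mul_rpow_three_halves_le {x y : ℝ} (hy : 1 ≤ y) (hyx : y ≤ x) {a b : ℕ} (ha : 2 ≤ a)
    (hb : 1 ≤ b) : x ^ (3 / 2 : ℝ) * y ^ (3 / 2 : ℝ) ≤ x ^ a * y ^ b := by
  have hy0 : 0 < y := by linarith
  have hx0 : 0 < x := by linarith
  calc x ^ (3 / 2 : ℝ) * y ^ (3 / 2 : ℝ)
      = x ^ (3 / 2 : ℝ) * (y ^ (1 / 2 : ℝ) * y) := by
        rw [← Real.rpow_add_one hy0.ne']; norm_num
    _ ≤ x ^ (3 / 2 : ℝ) * (x ^ (1 / 2 : ℝ) * y) := by gcongr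
    _ = x ^ 2 * y ^ 1 := by
        rw [← mul_assoc, ← Real.rpow_add hx0, pow_one, ← Real.rpow_natCast]; norm_num
    _ ≤ x ^ a * y ^ b := by
        gcongr
        linarith

lemma tendsto_partialEulerSum2 {a b : ℕ} (ha : 2 ≤ a) (hb : 1 ≤ b) {e₁ e₂ : ℝ} (he₁ : |e₁| ≤ 1)
    (he₂ : |e₂| ≤ 1) :
    Tendsto (partialEulerSum2 a b e₁ e₂) atTop (𝓝 (eulerSum2 a b e₁ e₂)) := by
  have hs : Summable fun n : ℕ => 1 / (n : ℝ) ^ (3 / 2 : ℝ) :=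
    Real.summable_one_div_nat_rpow.mpr (by norm_num)
  have hterm {n m : ℕ} (hm : m ∈ Finset.Ico 1 n) :
      ‖e₁ ^ n * e₂ ^ m / ((n : ℝ) ^ a * (m : ℝ) ^ b)‖
        ≤ 1 / (n : ℝ) ^ (3 / 2 : ℝ) * (1 / (m : ℝ) ^ (3 / 2 : ℝ)) := by
    obtain ⟨hm1, hmn⟩ := Finset.mem_Ico.mp hm
    have hm1' : (1 : ℝ) ≤ m := by exact_mod_cast hm1
    have hmn' : (m : ℝ) ≤ n := by exact_mod_cast hmn.le
    have hn0 : (0 : ℝ) < n := by linarith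
    rw [one_div_mul_one_div, norm_div, norm_mul, norm_pow, norm_pow,
      Real.norm_of_nonneg (by positivity : 0 ≤ (n : ℝ) ^ a * (m : ℝ) ^ b)]
    exact div_le_div₀ zero_le_one
      (mul_le_one₀ (pow_le_one₀ (norm_nonneg _) he₁) (by positivity)
        (pow_le_one₀ (norm_nonneg _) he₂))
      (by positivity) (mul_rpow_three_halves_le hm1' hmn' ha hb)
  refine tendsto_limUnder_sum_Icc_one
    (.of_norm_bounded (hs.mul_right (∑' m : ℕ, 1 / (m : ℝ) ^ (3 / 2 : ℝ))) fun n => ?_)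
  calc ‖∑ m ∈ Finset.Ico 1 n, e₁ ^ n * e₂ ^ m / ((n : ℝ) ^ a * (m : ℝ) ^ b)‖
      ≤ ∑ m ∈ Finset.Ico 1 n, 1 / (n : ℝ) ^ (3 / 2 : ℝ) * (1 / (m : ℝ) ^ (3 / 2 : ℝ)) :=
        norm_sum_le_of_le _ fun m hm => hterm hm
    _ = 1 / (n : ℝ) ^ (3 / 2 : ℝ) * ∑ m ∈ Finset.Ico 1 n, 1 / (m : ℝ) ^ (3 / 2 : ℝ) :=
        (Finset.mul_sum ..).symm
    _ ≤ 1 / (n : ℝ) ^ (3 / 2 : ℝ) * ∑' m : ℕ, 1 / (m : ℝ) ^ (3 / 2 : ℝ) := by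
        gcongr
        exact hs.sum_le_tsum _ fun m _ => by positivity

lemma tendsto_sum_mul_sub_shift {ι : Type*} {f : ι → ℝ} (hf : Summable f) {A : ℤ → ℝ} {C l : ℝ}
    (hA : ∀ z, |A z| ≤ C) (hlim : Tendsto A atTop (𝓝 l)) (c : ι → ℤ) (S : ℕ → Finset ι) :
    Tendsto (fun N : ℕ => ∑ i ∈ S N, f i * (A (N - c i) - A N)) atTop (𝓝 0) := by
  have hterm (i : ι) : Tendsto (fun N : ℕ => f i * (A (N - c i) - A N)) atTop (𝓝 0) := by
    have hN : Tendsto (fun N : ℕ => A N) atTop (𝓝 l) := hlim.comp tendsto_natCast_atTop_atTop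
    have hshift : Tendsto (fun N : ℕ => A (N - c i)) atTop (𝓝 l) :=
      hlim.comp (tendsto_atTop_add_const_right _ (-c i) tendsto_natCast_atTop_atTop)
    simpa using (hshift.sub hN).const_mul (f i)
  have htannery := tendsto_tsum_of_dominated_convergence (𝓕 := atTop)
    (f := fun N : ℕ => (S N : Set ι).indicator fun i => f i * (A (N - c i) - A N))
    (g := fun _ => 0) (bound := fun i => |f i| * (C + C)) (hf.abs.mul_right _)
    (fun i => squeeze_zero_norm (fun N => norm_indicator_le_norm_self _ _)
      (by simpa using (hterm i).norm))
    (.of_forall fun N i => (norm_indicator_le_norm_self _ _).trans ?_)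
  · simpa only [tsum_zero, ← sum_eq_tsum_indicator] using htannery
  · rw [norm_mul, Real.norm_eq_abs, Real.norm_eq_abs]
    gcongr
    exact (abs_sub _ _).trans (add_le_add (hA _) (hA _))

end Convergence

section AlternatingHarmonic

/-- The partial sum `∑_{1 ≤ j ≤ k} (-1)^j / j` of the alternating harmonic series. -/
noncomputable def altHarmonic (k : ℕ) : ℝ :=
  ∑ i ∈ Finset.range k, (-1 : ℝ) ^ (i + 1) / ((i : ℝ) + 1)

/-- The extension of `altHarmonic` to `ℤ` as a summatory function of `j ↦ (-1)^j / j`, read as `0`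
at `j = 0`. As this function is odd, the extension is symmetric under `z ↦ -1 - z`. -/
noncomputable def altHarmonicInt : ℤ → ℝ
  | .ofNat k => altHarmonic k
  | .negSucc k => altHarmonic k

lemma altHarmonic_succ (k : ℕ) :
    altHarmonic (k + 1) = altHarmonic k + (-1 : ℝ) ^ (k + 1) / ((k : ℝ) + 1) :=
  Finset.sum_range_succ ..

lemma exists_tendsto_altHarmonic : ∃ l, Tendsto altHarmonic atTop (𝓝 l) := by
  have hanti : Antitone fun i : ℕ => 1 / ((i : ℝ) + 1) := fun _ _ => Nat.one_div_le_one_div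
  obtain ⟨l, hl⟩ := hanti.tendsto_alternating_series_of_tendsto_zero
    tendsto_one_div_add_atTop_nhds_zero_nat
  refine ⟨-l, hl.neg.congr fun n => ?_⟩
  rw [altHarmonic, ← Finset.sum_neg_distrib]
  exact Finset.sum_congr rfl fun i _ => by ring

lemma exists_tendsto_altHarmonicInt : ∃ l, Tendsto altHarmonicInt atTop (𝓝 l) := by
  rw [← Nat.map_cast_int_atTop]
  exact exists_tendsto_altHarmonic

lemma exists_abs_altHarmonicInt_le : ∃ C, ∀ z, |altHarmonicInt z| ≤ C := by
  obtain ⟨l, hl⟩ := exists_tendsto_altHarmonic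
  obtain ⟨C, hC⟩ := (Metric.isBounded_range_of_tendsto _ hl).exists_norm_le
  refine ⟨C, ?_⟩
  rintro (k | k) <;> exact hC _ ⟨k, rfl⟩

lemma altHarmonicInt_neg (z : ℤ) : altHarmonicInt (-z) = altHarmonicInt (z - 1) := by
  rcases z with (_ | k) | k
  · rfl
  · rw [show Int.ofNat (k + 1) - 1 = Int.ofNat k by simp]
    rfl
  · rfl

lemma altHarmonicInt_sub_altHarmonicInt_sub_one (z : ℤ) :
    altHarmonicInt z - altHarmonicInt (z - 1) = (-1 : ℝ) ^ z / z := by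
  rcases z with (_ | k) | k
  · simp [show altHarmonicInt (-1) = altHarmonicInt 0 from rfl]
  · have hpred : Int.ofNat (k + 1) - 1 = Int.ofNat k := by simp
    rw [hpred]
    simp only [altHarmonicInt, altHarmonic_succ, Int.ofNat_eq_natCast, zpow_natCast]
    push_cast
    ring
  · have hpred : Int.negSucc k - 1 = Int.negSucc (k + 1) := rfl
    rw [hpred]
    simp only [altHarmonicInt, altHarmonic_succ, zpow_negSucc, Int.cast_negSucc,
      ← inv_pow, inv_neg_one]
    push_cast
    rw [div_neg]
    ring

lemma sum_Ioc_neg_one_pow_div_sub (c : ℤ) {m N : ℕ} (h : m ≤ N) :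
    ∑ n ∈ Finset.Ioc m N, (-1 : ℝ) ^ n / ((n : ℝ) - 2 * c)
      = altHarmonicInt (N - 2 * c) - altHarmonicInt (m - 2 * c) := by
  induction N, h using Nat.le_induction with
  | base => simp
  | succ N hN ih =>
    have hstep := altHarmonicInt_sub_altHarmonicInt_sub_one ((N + 1 : ℕ) - 2 * c)
    have hsign : (-1 : ℝ) ^ (((N + 1 : ℕ) : ℤ) - 2 * c) = (-1) ^ (N + 1) := by
      rw [zpow_sub₀ (by norm_num), zpow_mul, zpow_natCast]
      norm_num
    have hpred : ((N + 1 : ℕ) : ℤ) - 2 * c - 1 = N - 2 * c := by push_cast; ring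
    rw [hsign, hpred] at hstep
    push_cast at hstep ⊢
    rw [Finset.sum_Ioc_succ_top hN, ih]
    push_cast
    rw [← hstep]
    ring

end AlternatingHarmonic

section Rearrangement

lemma sum_Ico_inv_two_mul_sub {K : Type*} [Field K] [CharZero K] (n : ℕ) :
    ∑ m ∈ Finset.Ico 1 n, (2 * (m : K) - n)⁻¹ = 0 := by
  have hreflect := Finset.sum_Ico_reflect (fun m : ℕ => (2 * (m : K) - n)⁻¹) 1 n.le_succ
  have hodd : ∑ m ∈ Finset.Ico 1 n, (2 * ((n - m : ℕ) : K) - n)⁻¹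
      = -∑ m ∈ Finset.Ico 1 n, (2 * (m : K) - n)⁻¹ := by
    rw [← Finset.sum_neg_distrib]
    refine Finset.sum_congr rfl fun m hm => ?_
    rw [Nat.cast_sub (Finset.mem_Ico.mp hm).2.le, ← inv_neg]
    ring
  simp only [Nat.add_sub_cancel_left, Nat.add_sub_cancel] at hreflect
  exact self_eq_neg.mp (hreflect.symm.trans hodd)

section ClosedForm

variable {K : Type*} [Field K] {c x y : K}

lemma sum_pow_div_pow_mul_pow_diag (hc : c ≠ 0) (hy : y ≠ 0) {p : ℕ} (hp : 1 ≤ p) :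
    ∑ a ∈ Finset.Icc 2 p, c ^ (a - 1) / ((c * y) ^ a * y ^ (p + 1 - a))
      = ((p : K) - 1) / (c * y ^ (p + 1)) := by
  have hconst : ∀ a ∈ Finset.Icc 2 p,
      c ^ (a - 1) / ((c * y) ^ a * y ^ (p + 1 - a)) = 1 / (c * y ^ (p + 1)) := by
    intro a ha
    obtain ⟨ha2, hap⟩ := Finset.mem_Icc.mp ha
    have hcpow : c ^ a = c ^ (a - 1) * c := by rw [← pow_succ, Nat.sub_add_cancel (by omega)]
    have hypow : y ^ (p + 1) = y ^ a * y ^ (p + 1 - a) := by rw [← pow_add]; congr 1; omega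
    rw [mul_pow, hcpow, hypow]
    field_simp
  rw [Finset.sum_congr rfl hconst, Finset.sum_const, Nat.card_Icc, nsmul_eq_mul,
    show p + 1 - 2 = p - 1 by omega, Nat.cast_sub hp, Nat.cast_one, mul_one_div]

lemma sum_pow_div_pow_mul_pow_eq_geom_sum (hy : y ≠ 0) (p : ℕ) :
    ∑ a ∈ Finset.Icc 2 p, c ^ (a - 1) / (x ^ a * y ^ (p + 1 - a))
      = (x * y)⁻¹ * ∑ i ∈ Finset.Ico 1 p, (c / x) ^ i * y⁻¹ ^ (p - 1 - i) := by
  rw [← Finset.Ico_add_one_right_eq_Icc, ← Finset.sum_Ico_add' _ 1 p 1, Finset.mul_sum]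
  refine Finset.sum_congr rfl fun i hi => ?_
  obtain ⟨j, rfl⟩ := Nat.exists_eq_add_of_lt (Finset.mem_Ico.mp hi).2
  rw [show i + j + 1 + 1 - (i + 1) = j + 1 by omega, show i + j + 1 - 1 - i = j by omega,
    Nat.add_sub_cancel, div_pow, inv_pow, pow_succ, pow_succ]
  field_simp

lemma sum_pow_div_pow_mul_pow_of_ne (hx : x ≠ 0) (hy : y ≠ 0) (h : x ≠ c * y) {p : ℕ}
    (hp : 1 ≤ p) :
    ∑ a ∈ Finset.Icc 2 p, c ^ (a - 1) / (x ^ a * y ^ (p + 1 - a))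
      = (c / x) ^ p * (c * y - x)⁻¹ + ((x - c * y)⁻¹ - x⁻¹) / y ^ p := by
  have hne : c / x ≠ y⁻¹ := by
    rw [← one_div, Ne, div_eq_div_iff hx hy, one_mul]
    exact h.symm
  have hsub : c * y - x ≠ 0 := sub_ne_zero.mpr h.symm
  have hratio : c / x - y⁻¹ = (c * y - x) / (x * y) := by field_simp
  have hfraction : c / x * (c * y - x)⁻¹ = ((c * y - x)⁻¹ + x⁻¹) * y⁻¹ := by
    field_simp
    ring
  obtain ⟨q, rfl⟩ := Nat.exists_eq_add_of_le' hp
  calc _ = ((c / x) ^ (q + 1) - y⁻¹ ^ q * (c / x)) * (c * y - x)⁻¹ := by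
        rw [sum_pow_div_pow_mul_pow_eq_geom_sum hy, geom_sum₂_Ico hne hp, hratio, pow_one,
          Nat.add_sub_cancel]
        field_simp
    _ = (c / x) ^ (q + 1) * (c * y - x)⁻¹ - ((c * y - x)⁻¹ + x⁻¹) * y⁻¹ ^ (q + 1) := by
        rw [sub_mul, mul_assoc (y⁻¹ ^ q), hfraction]
        ring
    _ = _ := by
        rw [← neg_sub (c * y) x, inv_neg, inv_pow]
        ring

end ClosedForm

/-- The weighted summand `∑ a ∈ Icc 2 p, 2^(a-1) (-1)^n / (n^a m^(p+1-a))` of the double sum, less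
its part that is odd under `m ↦ n - m`. On the diagonal `n = 2m` the first quotient is read as `0`,
so that `(-1)^n / n` remains, and `p / 2` stands there in place of `(p - 1) / 2` to offset it. -/
noncomputable def reducedSummand (p n m : ℕ) : ℝ :=
  ((-1) ^ n / ((n : ℝ) - 2 * m) - (-1) ^ n / n) / (m : ℝ) ^ p
    + if n = 2 * m then (p : ℝ) / 2 * (1 / (m : ℝ) ^ (p + 1)) else 0

lemma sum_two_pow_mul_summand {p n m : ℕ} (hp : 1 ≤ p) (hn : n ≠ 0) (hm : m ≠ 0) :
    ∑ a ∈ Finset.Icc 2 p, (2 : ℝ) ^ (a - 1) * ((-1) ^ n / ((n : ℝ) ^ a * (m : ℝ) ^ (p + 1 - a)))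
      = (-1) ^ n * (2 / (n : ℝ)) ^ p * (2 * (m : ℝ) - n)⁻¹ + reducedSummand p n m := by
  have hn' : (n : ℝ) ≠ 0 := Nat.cast_ne_zero.mpr hn
  have hm' : (m : ℝ) ≠ 0 := Nat.cast_ne_zero.mpr hm
  have hsign : ∑ a ∈ Finset.Icc 2 p,
        (2 : ℝ) ^ (a - 1) * ((-1) ^ n / ((n : ℝ) ^ a * (m : ℝ) ^ (p + 1 - a)))
      = (-1) ^ n
        * ∑ a ∈ Finset.Icc 2 p, (2 : ℝ) ^ (a - 1) / ((n : ℝ) ^ a * (m : ℝ) ^ (p + 1 - a)) := by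
    rw [Finset.mul_sum]
    exact Finset.sum_congr rfl fun a _ => by ring
  rw [hsign, reducedSummand]
  split_ifs with h
  · have hcast : (n : ℝ) = 2 * m := by exact_mod_cast h
    rw [hcast, sum_pow_div_pow_mul_pow_diag two_ne_zero hm' hp, sub_self, inv_zero, div_zero, h]
    simp only [even_two_mul, Even.neg_pow, one_pow]
    field_simp
    ring
  · have hcast : (n : ℝ) ≠ 2 * m := by exact_mod_cast h
    rw [sum_pow_div_pow_mul_pow_of_ne hn' hm' hcast hp]
    ring

lemma sum_two_pow_mul_sum_summand {p : ℕ} (hp : 1 ≤ p) (n : ℕ) :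
    ∑ a ∈ Finset.Icc 2 p, ∑ m ∈ Finset.Ico 1 n,
        (2 : ℝ) ^ (a - 1) * ((-1) ^ n / ((n : ℝ) ^ a * (m : ℝ) ^ (p + 1 - a)))
      = ∑ m ∈ Finset.Ico 1 n, reducedSummand p n m := by
  rw [Finset.sum_comm]
  calc _ = ∑ m ∈ Finset.Ico 1 n,
        ((-1) ^ n * (2 / (n : ℝ)) ^ p * (2 * (m : ℝ) - n)⁻¹ + reducedSummand p n m) :=
        Finset.sum_congr rfl fun m hm =>
          have ⟨hm1, hmn⟩ := Finset.mem_Ico.mp hm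
          sum_two_pow_mul_summand hp (by omega) (by omega)
    _ = _ := by
        rw [Finset.sum_add_distrib, ← Finset.mul_sum, sum_Ico_inv_two_mul_sub, mul_zero, zero_add]

lemma sum_Ioc_reducedSummand (p : ℕ) {m N : ℕ} (hm : 1 ≤ m) (hmN : m ≤ N) :
    ∑ n ∈ Finset.Ioc m N, reducedSummand p n m
      = (-1) ^ m / (m : ℝ) ^ (p + 1)
        + (if 2 * m ≤ N then (p : ℝ) / 2 * (1 / (m : ℝ) ^ (p + 1)) else 0)
        + 1 / (m : ℝ) ^ p * (altHarmonicInt (N - 2 * m) - altHarmonicInt N) := by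
  have hdiag : 2 * m ∈ Finset.Ioc m N ↔ 2 * m ≤ N := by rw [Finset.mem_Ioc]; omega
  have hshift := sum_Ioc_neg_one_pow_div_sub m hmN
  have hzero := sum_Ioc_neg_one_pow_div_sub 0 hmN
  have hstart : (m : ℤ) - 2 * m = -m := by ring
  simp only [Int.cast_zero, mul_zero, sub_zero] at hzero
  rw [hstart, altHarmonicInt_neg, Int.cast_natCast] at hshift
  have hstep := altHarmonicInt_sub_altHarmonicInt_sub_one m
  rw [zpow_natCast, Int.cast_natCast] at hstep
  have hpow : (-1 : ℝ) ^ m / (m : ℝ) ^ (p + 1) = (-1) ^ m / m / (m : ℝ) ^ p := by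
    rw [div_div, pow_succ']
  simp only [reducedSummand]
  rw [Finset.sum_add_distrib, ← Finset.sum_div, Finset.sum_sub_distrib, hshift, hzero,
    Finset.sum_ite_eq', if_congr hdiag rfl rfl, hpow, ← hstep]
  ring

lemma sum_two_pow_mul_partialEulerSum2 {p : ℕ} (hp : 1 ≤ p) (N : ℕ) :
    ∑ a ∈ Finset.Icc 2 p, (2 : ℝ) ^ (a - 1) * partialEulerSum2 a (p + 1 - a) (-1) 1 N
      = partialEulerSum1 (p + 1) (-1) N + (p : ℝ) / 2 * partialEulerSum1 (p + 1) 1 (N / 2)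
        + ∑ m ∈ Finset.Icc 1 N,
          1 / (m : ℝ) ^ p * (altHarmonicInt (N - 2 * m) - altHarmonicInt N) := by
  have hhalf : (Finset.Icc 1 N).filter (2 * · ≤ N) = Finset.Icc 1 (N / 2) := by
    ext m
    simp only [Finset.mem_filter, Finset.mem_Icc]
    omega
  calc _ = ∑ n ∈ Finset.Icc 1 N, ∑ m ∈ Finset.Ico 1 n, reducedSummand p n m := by
        simp only [partialEulerSum2, one_pow, mul_one, Finset.mul_sum]
        rw [Finset.sum_comm]
        exact Finset.sum_congr rfl fun n _ => sum_two_pow_mul_sum_summand hp n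
    _ = ∑ m ∈ Finset.Icc 1 N, ∑ n ∈ Finset.Ioc m N, reducedSummand p n m :=
        Finset.sum_comm' fun n m => by
          simp only [Finset.mem_Icc, Finset.mem_Ico, Finset.mem_Ioc]
          omega
    _ = _ := by
        rw [Finset.sum_congr rfl fun m hm => sum_Ioc_reducedSummand p
          (Finset.mem_Icc.mp hm).1 (Finset.mem_Icc.mp hm).2, Finset.sum_add_distrib,
          Finset.sum_add_distrib, ← Finset.sum_filter, hhalf, ← Finset.mul_sum]
        simp only [partialEulerSum1, one_pow]

end Rearrangement

end WeightedEulerSum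

open WeightedEulerSum in
/-- For `w ≥ 3`: `∑_{a+b=w, a≥2} 2^{a−1} ζ(ā,b) = ζ(w̄) + ((w−1)/2) ζ(w)`. -/
theorem weighted_sum_bar_unbar (w : ℕ) (hw : 3 ≤ w) :
    ∑ a ∈ Finset.Icc 2 (w - 1), (2 : ℝ) ^ (a - 1) * eulerSum2 a (w - a) (-1) 1
      = eulerSum1 w (-1) + ((w : ℝ) - 1) / 2 * eulerSum1 w 1 := by
  obtain ⟨p, rfl⟩ := Nat.exists_eq_add_of_le' (show 1 ≤ w by omega)
  obtain ⟨l, hl⟩ := exists_tendsto_altHarmonicInt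
  obtain ⟨C, hC⟩ := exists_abs_altHarmonicInt_le
  have hleft : Tendsto
      (fun N => ∑ a ∈ Finset.Icc 2 p, (2 : ℝ) ^ (a - 1) * partialEulerSum2 a (p + 1 - a) (-1) 1 N)
      atTop (𝓝 (∑ a ∈ Finset.Icc 2 p, (2 : ℝ) ^ (a - 1) * eulerSum2 a (p + 1 - a) (-1) 1)) :=
    tendsto_finsetSum _ fun a ha =>
      have ⟨ha2, hap⟩ := Finset.mem_Icc.mp ha
      (tendsto_partialEulerSum2 ha2 (by omega) (by simp) (by simp)).const_mul _
  have halt : Tendsto (partialEulerSum1 (p + 1) (-1)) atTop (𝓝 (eulerSum1 (p + 1) (-1))) :=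
    tendsto_partialEulerSum1 (by omega) (by simp)
  have hone : Tendsto (fun N => partialEulerSum1 (p + 1) 1 (N / 2)) atTop
      (𝓝 (eulerSum1 (p + 1) 1)) :=
    (tendsto_partialEulerSum1 (by omega) (by simp)).comp (Nat.tendsto_div_const_atTop two_ne_zero)
  have herror := tendsto_sum_mul_sub_shift
    (Real.summable_one_div_nat_pow.mpr (show 1 < p by omega)) hC hl (2 * ·) (Finset.Icc 1)
  simp only [sum_two_pow_mul_partialEulerSum2 (show 1 ≤ p by omega)] at hleft
  have hright := (halt.add (hone.const_mul ((p : ℝ) / 2))).add herror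
  simpa using tendsto_nhds_unique hleft hright
end

section
/- For every integer w ≥ 4, with u = w−2, the triple T-values with last entry 1 satisfy ∑_{a+b=w−1, a≥2, b≥1} T(a,b,1) = 2·T(u,2) + 4·( ζ(u,1̄,1̄) + ζ(ū,1,1) − ζ(ū,1,1̄) − ζ(u,1̄,1) ). -/
open Filter

/-!
Write `o`, `e` for the reciprocals on odd and even integers and `O n = ∑_{k < n} o k`. For `m` odd,
`n` even, partial fractions turn the sum over `a` of `1 / (mᵃ n^(u+1-a))` into
`(o (m - n) - o m) / nᵘ - o (m - n) / mᵘ`. The first part telescopes over `m` to `O n / nᵘ`, which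
produces `∑_{n even} (O n)² / nᵘ`. The second is a convolution, which
`o i * o j = e (i + j) * (o i + o j)` evaluates to `2 T(u, 1, 1)`. On the Euler side, splitting the
signs by parity and using `O² = ∑ o² + 2 ∑ o O` leads to the same two quantities.
-/

namespace MultipleTValue

open Finset Topology

/-- The strict partial sum `∑_{1 ≤ k < n} f k`, the building block of nested sums. -/
def sumBelow {M : Type*} [AddCommMonoid M] (f : ℕ → M) (n : ℕ) : M := ∑ k ∈ Ico 1 n, f k

/-- The summand of outermost index `m` in the nested sum `∑_{m > n > k ≥ 1} f m * g n * h k`. -/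
def nestedTerm {R : Type*} [Semiring R] (f g h : ℕ → R) (m : ℕ) : R :=
  f m * sumBelow (fun n => g n * sumBelow h n) m

lemma sumBelow_zero {M : Type*} [AddCommMonoid M] (f : ℕ → M) : sumBelow f 0 = 0 := rfl

lemma sumBelow_add {M : Type*} [AddCommMonoid M] (f g : ℕ → M) (n : ℕ) :
    sumBelow (fun k => f k + g k) n = sumBelow f n + sumBelow g n :=
  sum_add_distrib

lemma sumBelow_sub {M : Type*} [AddCommGroup M] (f g : ℕ → M) (n : ℕ) :
    sumBelow (fun k => f k - g k) n = sumBelow f n - sumBelow g n :=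
  sum_sub_distrib f g

lemma sumBelow_succ {M : Type*} [AddCommMonoid M] {n : ℕ} (hn : 1 ≤ n) (f : ℕ → M) :
    sumBelow f (n + 1) = sumBelow f n + f n :=
  sum_Ico_succ_top hn f

lemma sumBelow_reflect {M : Type*} [AddCommMonoid M] (f : ℕ → M) (n : ℕ) :
    sumBelow (fun k => f (n - k)) n = sumBelow f n := by
  simpa [sumBelow] using sum_Ico_reflect f 1 n.le_succ

lemma sum_range_eq_sumBelow {M : Type*} [AddCommMonoid M] {f : ℕ → M} (hf : f 0 = 0) (n : ℕ) :
    ∑ k ∈ range n, f k = sumBelow f n := by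
  rcases n.eq_zero_or_pos with rfl | hn
  · rfl
  · rw [sum_range_eq_add_Ico f hn, hf, zero_add, sumBelow]

lemma sum_antidiagonal_eq_sumBelow {M : Type*} [AddCommMonoid M] {f : ℕ × ℕ → M} {m : ℕ}
    (hleft : f (0, m) = 0) (hright : f (m, 0) = 0) :
    ∑ p ∈ antidiagonal m, f p = sumBelow (fun n => f (n, m - n)) m := by
  rw [Nat.sum_antidiagonal_eq_sum_range_succ_mk, sum_range_succ, Nat.sub_self, hright, add_zero]
  exact sum_range_eq_sumBelow hleft m

/-- Both sides run over the triples `i, j, k ≥ 1` with `i + j + k = m` and sum `f i * g k`. -/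
lemma sumBelow_mul_sumBelow_reflect {R : Type*} [NonUnitalNonAssocSemiring R] (f g : ℕ → R)
    (m : ℕ) :
    sumBelow (fun n => f (m - n) * sumBelow g n) m =
      sumBelow (fun s => sumBelow (fun k => f (s - k) * g k) s) m := by
  simp only [sumBelow, mul_sum, sum_sigma']
  refine sum_nbij' (fun p => ⟨m - p.1 + p.2, p.2⟩) (fun p => ⟨m - p.1 + p.2, p.2⟩)
    ?_ ?_ ?_ ?_ ?_ <;> rintro ⟨n, k⟩ h <;> simp only [mem_sigma, mem_Ico] at h ⊢
  · omega
  · omega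
  · rw [show m - (m - n + k) + k = n by omega]
  · rw [show m - (m - n + k) + k = n by omega]
  · rw [Nat.add_sub_cancel]

lemma sq_sumBelow {R : Type*} [CommSemiring R] (f : ℕ → R) (n : ℕ) :
    sumBelow f n ^ 2 =
      sumBelow (fun k => f k ^ 2) n + 2 * sumBelow (fun k => f k * sumBelow f k) n := by
  induction n with
  | zero => simp [sumBelow_zero]
  | succ n ih =>
    rcases n.eq_zero_or_pos with rfl | hn
    · simp [sumBelow]
    · simp only [sumBelow_succ hn, add_sq, ih]
      ring

lemma hasSum_sub_shift {f : ℕ → ℝ} {n : ℕ} (hf : Tendsto f atTop (𝓝 0))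
    (hle : ∀ r, f (r + n) ≤ f r) :
    HasSum (fun r => f r - f (r + n)) (∑ i ∈ range n, f i) := by
  rw [hasSum_iff_tendsto_nat_of_nonneg fun r => sub_nonneg.2 (hle r)]
  have htail : Tendsto (fun N => ∑ i ∈ range n, f (N + i)) atTop (𝓝 0) := by
    simpa using tendsto_finsetSum (range n) fun i _ => hf.comp (tendsto_add_atTop_nat i)
  have hpartial (N : ℕ) : ∑ r ∈ range N, (f r - f (r + n)) =
      ∑ i ∈ range n, f i - ∑ i ∈ range n, f (N + i) := by
    have hN := sum_range_add f N n
    have hn := sum_range_add f n N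
    simp only [add_comm n] at hn
    rw [sum_sub_distrib]
    linear_combination hn - hN
  simpa [hpartial] using htail.const_sub (∑ i ∈ range n, f i)

lemma hasSum_sum_antidiagonal {M : Type*} [AddCommMonoid M] [TopologicalSpace M]
    [ContinuousAdd M] [RegularSpace M] {f : ℕ × ℕ → M} {a : M} (hf : HasSum f a) :
    HasSum (fun m => ∑ p ∈ antidiagonal m, f p) a :=
  (HasAntidiagonal.sigmaAntidiagonalEquivProd.hasSum_iff.2 hf).sigma fun m =>
    Finset.hasSum (antidiagonal m) f

lemma hasSum_prod_of_nonneg {α β : Type*} {f : α × β → ℝ} {g : α → ℝ} {a : ℝ} (hf : 0 ≤ f)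
    (hrow : ∀ x, HasSum (fun y => f (x, y)) (g x)) (hg : HasSum g a) : HasSum f a := by
  have hsum : Summable f := (summable_prod_of_nonneg hf).2
    ⟨fun x => (hrow x).summable, by simpa only [(hrow _).tsum_eq] using hg.summable⟩
  rw [← (hsum.hasSum.prod_fiberwise hrow).unique hg]
  exact hsum.hasSum

lemma hasSum_limUnder_sum_Icc {f : ℕ → ℝ} (hf : Summable f) (h0 : f 0 = 0) :
    HasSum f (limUnder atTop fun N : ℕ => ∑ m ∈ Icc 1 N, f m) := by
  have hlim : Tendsto (fun N => ∑ m ∈ Icc 1 N, f m) atTop (𝓝 (∑' m, f m)) :=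
    (hf.hasSum.tendsto_sum_nat.comp (tendsto_add_atTop_nat 1)).congr fun N =>
      sum_range_eq_sumBelow h0 (N + 1)
  rw [hlim.limUnder_eq]
  exact hf.hasSum

lemma one_le_one_add_log (n : ℕ) : 1 ≤ 1 + Real.log n :=
  le_add_of_nonneg_right (Real.log_natCast_nonneg n)

lemma log_natCast_le_log {k n : ℕ} (hkn : k ≤ n) : Real.log k ≤ Real.log n := by
  rcases k.eq_zero_or_pos with rfl | hk
  · simpa using Real.log_natCast_nonneg n
  · gcongr

lemma sumBelow_one_div_le (n : ℕ) : sumBelow (fun k => 1 / (k : ℝ)) n ≤ 1 + Real.log n := by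
  calc sumBelow (fun k => 1 / (k : ℝ)) n ≤ ∑ k ∈ Icc 1 n, 1 / (k : ℝ) :=
        sum_le_sum_of_subset_of_nonneg Ico_subset_Icc_self fun _ _ _ => by positivity
    _ = (harmonic n : ℝ) := by simp [harmonic_eq_sum_Icc]
    _ ≤ 1 + Real.log n := harmonic_le_one_add_log n

lemma abs_sumBelow_mul_le {f g : ℕ → ℝ} {n : ℕ} {C : ℝ} (hf : ∀ k, |f k| ≤ 1 / k)
    (hg : ∀ k ≤ n, |g k| ≤ C) :
    |sumBelow (fun k => f k * g k) n| ≤ (1 + Real.log n) * C := by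
  have hC : 0 ≤ C := (abs_nonneg _).trans (hg n le_rfl)
  calc |sumBelow (fun k => f k * g k) n| ≤ ∑ k ∈ Ico 1 n, |f k * g k| := abs_sum_le_sum_abs _ _
    _ ≤ ∑ k ∈ Ico 1 n, 1 / (k : ℝ) * C := by
        refine sum_le_sum fun k hk => ?_
        rw [abs_mul]
        gcongr
        exacts [hf k, hg k (mem_Ico.1 hk).2.le]
    _ = sumBelow (fun k => 1 / (k : ℝ)) n * C := (sum_mul _ _ _).symm
    _ ≤ (1 + Real.log n) * C := by
        gcongr
        exact sumBelow_one_div_le n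

lemma abs_sumBelow_le {f : ℕ → ℝ} (hf : ∀ k, |f k| ≤ 1 / k) (n : ℕ) :
    |sumBelow f n| ≤ 1 + Real.log n := by
  simpa using abs_sumBelow_mul_le (g := 1) (n := n) (C := 1) hf (by simp)

lemma abs_sumBelow_mul_sumBelow_le {f g : ℕ → ℝ} (hf : ∀ k, |f k| ≤ 1 / k)
    (hg : ∀ k, |g k| ≤ 1 / k) (n : ℕ) :
    |sumBelow (fun k => f k * sumBelow g k) n| ≤ (1 + Real.log n) ^ 2 := by
  rw [sq]
  refine abs_sumBelow_mul_le hf fun k hk => (abs_sumBelow_le hg k).trans ?_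
  gcongr 1 + ?_
  exact log_natCast_le_log hk

lemma summable_one_add_log_sq_div_sq :
    Summable fun n : ℕ => (1 + Real.log n) ^ 2 / (n : ℝ) ^ 2 := by
  have hlog : (fun x => 1 + Real.log x) =O[atTop] fun x : ℝ => x ^ (1 / 4 : ℝ) :=
    ((Asymptotics.isLittleO_const_left.2 (.inr (tendsto_norm_atTop_atTop.comp
      (tendsto_rpow_atTop (by norm_num))))).add (isLittleO_log_rpow_atTop (by norm_num))).isBigO
  have hnat := (hlog.pow 2).mul (Asymptotics.isBigO_refl (fun x : ℝ => (x ^ 2)⁻¹) atTop)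
    |>.comp_tendsto tendsto_natCast_atTop_atTop
  refine summable_of_isBigO_nat (Real.summable_one_div_nat_rpow (p := 3 / 2).2 (by norm_num))
    (hnat.congr' (.of_forall fun n => (div_eq_mul_inv _ _).symm) ?_)
  filter_upwards [eventually_gt_atTop 0] with n hn
  have hn' : (0 : ℝ) < n := Nat.cast_pos.2 hn
  simp only [Function.comp_apply, ← Real.rpow_natCast, ← Real.rpow_mul hn'.le,
    ← Real.rpow_neg hn'.le, ← Real.rpow_add hn', one_div]
  norm_num

lemma summable_mul_of_abs_le_log_sq {f g : ℕ → ℝ} (hf : ∀ n, |f n| ≤ 1 / (n : ℝ) ^ 2)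
    (hg : ∀ n, |g n| ≤ (1 + Real.log n) ^ 2) : Summable fun n => f n * g n := by
  refine .of_norm_bounded summable_one_add_log_sq_div_sq fun n => ?_
  rw [Real.norm_eq_abs, abs_mul, div_eq_mul_one_div, mul_comm]
  gcongr
  exacts [hg n, hf n]

lemma summable_nestedTerm {f g h : ℕ → ℝ} (hf : ∀ n, |f n| ≤ 1 / (n : ℝ) ^ 2)
    (hg : ∀ n, |g n| ≤ 1 / n) (hh : ∀ n, |h n| ≤ 1 / n) : Summable (nestedTerm f g h) :=
  summable_mul_of_abs_le_log_sq hf (abs_sumBelow_mul_sumBelow_le hg hh)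

lemma one_div_pow_le_one_div_pow_of_le {s t : ℕ} (hst : s ≤ t) (n : ℕ) :
    1 / (n : ℝ) ^ t ≤ 1 / (n : ℝ) ^ s := by
  rcases n.eq_zero_or_pos with rfl | hn
  · rcases t.eq_zero_or_pos with rfl | ht
    · rw [Nat.le_zero.1 hst]
    · simp only [Nat.cast_zero, zero_pow ht.ne', div_zero]
      positivity
  · have : (1 : ℝ) ≤ n := Nat.one_le_cast.2 hn
    gcongr

lemma abs_le_one_div_pow_of_le {x : ℝ} {n s t : ℕ} (hst : s ≤ t) (hx : |x| ≤ 1 / (n : ℝ) ^ t) :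
    |x| ≤ 1 / (n : ℝ) ^ s :=
  hx.trans (one_div_pow_le_one_div_pow_of_le hst n)

lemma abs_le_one_div_of_one_le {x : ℝ} {n s : ℕ} (hs : 1 ≤ s) (hx : |x| ≤ 1 / (n : ℝ) ^ s) :
    |x| ≤ 1 / n := by
  simpa using abs_le_one_div_pow_of_le hs hx

/-- The weight `eⁿ / nˢ` of one argument of an Euler sum. -/
noncomputable def signedInvPow (e : ℝ) (s n : ℕ) : ℝ := e ^ n / (n : ℝ) ^ s

/-- The weight `1 / nˢ` on odd `n`, extended by zero. -/
noncomputable def oddInvPow (s n : ℕ) : ℝ := if n % 2 = 1 then 1 / (n : ℝ) ^ s else 0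

/-- The weight `1 / nˢ` on even `n`, extended by zero. -/
noncomputable def evenInvPow (s n : ℕ) : ℝ := if n % 2 = 0 then 1 / (n : ℝ) ^ s else 0

/-- The odd harmonic number `∑_{k < n, k odd} 1 / k`. -/
local notation "oddHarmonic" => sumBelow (oddInvPow 1)

lemma abs_signedInvPow_le {e : ℝ} (he : |e| ≤ 1) (s n : ℕ) :
    |signedInvPow e s n| ≤ 1 / (n : ℝ) ^ s := by
  rw [signedInvPow, abs_div, abs_pow, abs_of_nonneg (by positivity : (0 : ℝ) ≤ (n : ℝ) ^ s)]
  gcongr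
  exact pow_le_one₀ (abs_nonneg e) he

lemma oddInvPow_nonneg (s n : ℕ) : 0 ≤ oddInvPow s n := by
  unfold oddInvPow
  split_ifs <;> positivity

lemma oddInvPow_le (s n : ℕ) : oddInvPow s n ≤ 1 / (n : ℝ) ^ s := by
  unfold oddInvPow
  split_ifs
  · rfl
  · positivity

lemma evenInvPow_nonneg (s n : ℕ) : 0 ≤ evenInvPow s n := by
  unfold evenInvPow
  split_ifs <;> positivity

lemma evenInvPow_le (s n : ℕ) : evenInvPow s n ≤ 1 / (n : ℝ) ^ s := by
  unfold evenInvPow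
  split_ifs
  · rfl
  · positivity

lemma abs_oddInvPow_le (s n : ℕ) : |oddInvPow s n| ≤ 1 / (n : ℝ) ^ s :=
  (abs_of_nonneg (oddInvPow_nonneg s n)).trans_le (oddInvPow_le s n)

lemma abs_evenInvPow_le (s n : ℕ) : |evenInvPow s n| ≤ 1 / (n : ℝ) ^ s :=
  (abs_of_nonneg (evenInvPow_nonneg s n)).trans_le (evenInvPow_le s n)

lemma abs_oddInvPow_one_le (n : ℕ) : |oddInvPow 1 n| ≤ 1 / n :=
  abs_le_one_div_of_one_le le_rfl (abs_oddInvPow_le 1 n)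

lemma oddInvPow_zero (s : ℕ) : oddInvPow s 0 = 0 := rfl

lemma oddHarmonic_nonneg (n : ℕ) : 0 ≤ oddHarmonic n :=
  sum_nonneg fun k _ => oddInvPow_nonneg 1 k

lemma oddInvPow_sq (s n : ℕ) : oddInvPow s n ^ 2 = oddInvPow (2 * s) n := by
  simp only [oddInvPow, ite_pow, one_div, inv_pow, ← pow_mul, mul_comm s]
  simp

lemma tendsto_oddInvPow_one : Tendsto (oddInvPow 1) atTop (𝓝 0) :=
  squeeze_zero_norm abs_oddInvPow_one_le tendsto_one_div_atTop_nhds_zero_nat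

lemma signedInvPow_one_left (s n : ℕ) :
    signedInvPow 1 s n = evenInvPow s n + oddInvPow s n := by
  rcases n.mod_two_eq_zero_or_one with hn | hn <;>
    simp [signedInvPow, evenInvPow, oddInvPow, hn]

lemma signedInvPow_neg_one_left (s n : ℕ) :
    signedInvPow (-1) s n = evenInvPow s n - oddInvPow s n := by
  rcases n.mod_two_eq_zero_or_one with hn | hn
  · simp [signedInvPow, evenInvPow, oddInvPow, hn, (Nat.even_iff.2 hn).neg_one_pow]
  · simp [signedInvPow, evenInvPow, oddInvPow, hn, (Nat.odd_iff.2 hn).neg_one_pow, neg_div]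

lemma hasSum_eulerSum3 {s₁ s₂ s₃ : ℕ} {e₁ e₂ e₃ : ℝ} (hs₁ : 2 ≤ s₁) (hs₂ : 1 ≤ s₂)
    (hs₃ : 1 ≤ s₃) (he₁ : |e₁| ≤ 1) (he₂ : |e₂| ≤ 1) (he₃ : |e₃| ≤ 1) :
    HasSum (nestedTerm (signedInvPow e₁ s₁) (signedInvPow e₂ s₂) (signedInvPow e₃ s₃))
      (eulerSum3 s₁ s₂ s₃ e₁ e₂ e₃) := by
  have hterm (m : ℕ) :
      nestedTerm (signedInvPow e₁ s₁) (signedInvPow e₂ s₂) (signedInvPow e₃ s₃) m =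
      ∑ n ∈ Ico 1 m, ∑ k ∈ Ico 1 n,
        e₁ ^ m * e₂ ^ n * e₃ ^ k / ((m : ℝ) ^ s₁ * (n : ℝ) ^ s₂ * (k : ℝ) ^ s₃) := by
    simp only [nestedTerm, sumBelow, signedInvPow, mul_sum, div_mul_div_comm, mul_assoc]
  simp only [eulerSum3, ← hterm]
  exact hasSum_limUnder_sum_Icc (summable_nestedTerm
    (fun n => abs_le_one_div_pow_of_le hs₁ (abs_signedInvPow_le he₁ s₁ n))
    (fun n => abs_le_one_div_of_one_le hs₂ (abs_signedInvPow_le he₂ s₂ n))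
    (fun n => abs_le_one_div_of_one_le hs₃ (abs_signedInvPow_le he₃ s₃ n))) (mul_zero _)

lemma hasSum_tValue3 {s₁ s₂ s₃ : ℕ} (hs₁ : 2 ≤ s₁) (hs₂ : 1 ≤ s₂) (hs₃ : 1 ≤ s₃) :
    HasSum (fun m => 8 * nestedTerm (oddInvPow s₁) (evenInvPow s₂) (oddInvPow s₃) m)
      (tValue3 s₁ s₂ s₃) := by
  have hterm (m : ℕ) : 8 * nestedTerm (oddInvPow s₁) (evenInvPow s₂) (oddInvPow s₃) m =
      ∑ n ∈ Ico 1 m, ∑ k ∈ Ico 1 n, if m % 2 = 1 ∧ n % 2 = 0 ∧ k % 2 = 1 then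
        8 / ((m : ℝ) ^ s₁ * (n : ℝ) ^ s₂ * (k : ℝ) ^ s₃) else 0 := by
    simp only [nestedTerm, sumBelow, mul_sum, oddInvPow, evenInvPow, ite_and]
    refine sum_congr rfl fun n _ => sum_congr rfl fun k _ => ?_
    split_ifs <;> ring
  simp only [tValue3, ← hterm]
  exact hasSum_limUnder_sum_Icc ((summable_nestedTerm
    (fun n => abs_le_one_div_pow_of_le hs₁ (abs_oddInvPow_le s₁ n))
    (fun n => abs_le_one_div_of_one_le hs₂ (abs_evenInvPow_le s₂ n))
    (fun n => abs_le_one_div_of_one_le hs₃ (abs_oddInvPow_le s₃ n))).mul_left 8)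
    (by simp [nestedTerm, sumBelow_zero])

lemma hasSum_tValue2 {s₁ s₂ : ℕ} (hs₁ : 2 ≤ s₁) (hs₂ : 1 ≤ s₂) :
    HasSum (fun m => 4 * (evenInvPow s₁ m * sumBelow (oddInvPow s₂) m)) (tValue2 s₁ s₂) := by
  have hterm (m : ℕ) : 4 * (evenInvPow s₁ m * sumBelow (oddInvPow s₂) m) =
      ∑ n ∈ Ico 1 m, if m % 2 = 0 ∧ n % 2 = 1 then
        4 / ((m : ℝ) ^ s₁ * (n : ℝ) ^ s₂) else 0 := by
    simp only [sumBelow, mul_sum, oddInvPow, evenInvPow, ite_and]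
    refine sum_congr rfl fun n _ => ?_
    split_ifs <;> ring
  have hinner (n : ℕ) : |sumBelow (oddInvPow s₂) n| ≤ (1 + Real.log n) ^ 2 :=
    (abs_sumBelow_le (fun k => abs_le_one_div_of_one_le hs₂ (abs_oddInvPow_le s₂ k)) n).trans
      (le_self_pow₀ (one_le_one_add_log n) two_ne_zero)
  simp only [tValue2, ← hterm]
  exact hasSum_limUnder_sum_Icc ((summable_mul_of_abs_le_log_sq
    (fun n => abs_le_one_div_pow_of_le hs₁ (abs_evenInvPow_le s₁ n)) hinner).mul_left 4)
    (by simp [sumBelow_zero])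

lemma sum_one_div_pow_mul_one_div_pow {K : Type*} [Field K] {x y : K} {u : ℕ} (hu : 1 ≤ u)
    (hx : x ≠ 0) (hy : y ≠ 0) (hxy : x ≠ y) :
    ∑ a ∈ Icc 2 u, 1 / x ^ a * (1 / y ^ (u + 1 - a)) =
      1 / y ^ u * (1 / (x - y) - 1 / x) - 1 / x ^ u * (1 / (x - y)) := by
  obtain ⟨v, rfl⟩ := Nat.exists_eq_add_of_le' hu
  have hgeom := geom_sum₂_Ico (inv_injective.ne hxy) (Nat.le_add_left 2 v)
  calc ∑ a ∈ Icc 2 (v + 1), 1 / x ^ a * (1 / y ^ (v + 1 + 1 - a))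
      = (∑ a ∈ Ico 2 (v + 2), x⁻¹ ^ a * y⁻¹ ^ (v + 2 - 1 - a)) * y⁻¹ := by
        rw [sum_mul]
        refine sum_congr rfl fun a ha => ?_
        rw [show v + 1 + 1 - a = v + 2 - 1 - a + 1 by grind]
        simp only [one_div, inv_pow, pow_succ, mul_inv, mul_assoc]
    _ = _ := by
        rw [hgeom, Nat.add_sub_cancel, inv_sub_inv hx hy]
        simp only [inv_pow]
        field_simp
        ring

lemma sum_oddInvPow_mul_evenInvPow {u m n : ℕ} (hu : 1 ≤ u) (hn : 1 ≤ n) (hnm : n < m) :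
    ∑ a ∈ Icc 2 u, oddInvPow a m * evenInvPow (u + 1 - a) n =
      evenInvPow u n * (oddInvPow 1 (m - n) - oddInvPow 1 m) -
        oddInvPow u m * oddInvPow 1 (m - n) := by
  have hn0 : (n : ℝ) ≠ 0 := Nat.cast_ne_zero.2 (by omega)
  have hm0 : (m : ℝ) ≠ 0 := Nat.cast_ne_zero.2 (by omega)
  have hmn : (m : ℝ) ≠ n := Nat.cast_injective.ne hnm.ne'
  by_cases hm2 : m % 2 = 1 <;> by_cases hn2 : n % 2 = 0
  · simpa [oddInvPow, evenInvPow, hm2, hn2, show (m - n) % 2 = 1 by omega, Nat.cast_sub hnm.le]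
      using sum_one_div_pow_mul_one_div_pow hu hm0 hn0 hmn
  · simp [oddInvPow, evenInvPow, hn2, show ¬(m - n) % 2 = 1 by omega]
  · simp [oddInvPow, evenInvPow, hm2, show ¬(m - n) % 2 = 1 by omega]
  · simp [oddInvPow, evenInvPow, hm2, hn2]

lemma oddInvPow_one_mul_oddInvPow_one {k s : ℕ} (hk : 1 ≤ k) (hks : k < s) :
    oddInvPow 1 (s - k) * oddInvPow 1 k =
      evenInvPow 1 s * (oddInvPow 1 (s - k) + oddInvPow 1 k) := by
  have hs0 : (s : ℝ) ≠ 0 := Nat.cast_ne_zero.2 (by omega)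
  have hsk : (s : ℝ) - k ≠ 0 := sub_ne_zero.2 (Nat.cast_injective.ne hks.ne')
  by_cases hs2 : s % 2 = 0 <;> by_cases hk2 : k % 2 = 1
  · simp only [oddInvPow, evenInvPow, hs2, hk2, show (s - k) % 2 = 1 by omega,
      if_true, pow_one, Nat.cast_sub hks.le]
    field_simp
    ring
  · simp [oddInvPow, hk2, show ¬(s - k) % 2 = 1 by omega]
  · simp [oddInvPow, evenInvPow, hs2, show ¬(s - k) % 2 = 1 by omega]
  · simp [oddInvPow, evenInvPow, hs2, hk2]

lemma sumBelow_oddInvPow_mul_reflect (s : ℕ) :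
    sumBelow (fun k => oddInvPow 1 (s - k) * oddInvPow 1 k) s =
      2 * (evenInvPow 1 s * oddHarmonic s) := by
  calc sumBelow (fun k => oddInvPow 1 (s - k) * oddInvPow 1 k) s
      = ∑ k ∈ Ico 1 s, evenInvPow 1 s * (oddInvPow 1 (s - k) + oddInvPow 1 k) :=
        sum_congr rfl fun k hk =>
          oddInvPow_one_mul_oddInvPow_one (mem_Ico.1 hk).1 (mem_Ico.1 hk).2
    _ = evenInvPow 1 s * sumBelow (fun k => oddInvPow 1 (s - k) + oddInvPow 1 k) s :=
        (mul_sum _ _ _).symm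
    _ = 2 * (evenInvPow 1 s * oddHarmonic s) := by
        rw [sumBelow_add, sumBelow_reflect]
        ring

lemma sumBelow_oddInvPow_mul_oddHarmonic (m : ℕ) :
    sumBelow (fun n => oddInvPow 1 (m - n) * oddHarmonic n) m =
      2 * sumBelow (fun s => evenInvPow 1 s * oddHarmonic s) m := by
  simp only [sumBelow_mul_sumBelow_reflect, sumBelow_oddInvPow_mul_reflect]
  exact (mul_sum _ _ _).symm

lemma sum_nestedTerm_oddInvPow_evenInvPow {u : ℕ} (hu : 1 ≤ u) (m : ℕ) :
    ∑ a ∈ Icc 2 u, nestedTerm (oddInvPow a) (evenInvPow (u + 1 - a)) (oddInvPow 1) m =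
      sumBelow (fun n =>
        evenInvPow u n * oddHarmonic n * (oddInvPow 1 (m - n) - oddInvPow 1 m)) m -
      2 * nestedTerm (oddInvPow u) (evenInvPow 1) (oddInvPow 1) m := by
  have hinner (n : ℕ) (hn : n ∈ Ico 1 m) :
      ∑ a ∈ Icc 2 u, oddInvPow a m * (evenInvPow (u + 1 - a) n * oddHarmonic n) =
        evenInvPow u n * oddHarmonic n * (oddInvPow 1 (m - n) - oddInvPow 1 m) -
          oddInvPow u m * (oddInvPow 1 (m - n) * oddHarmonic n) := by
    simp only [← mul_assoc, ← sum_mul,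
      sum_oddInvPow_mul_evenInvPow hu (mem_Ico.1 hn).1 (mem_Ico.1 hn).2]
    ring
  have hconv := sumBelow_oddInvPow_mul_oddHarmonic m
  simp only [nestedTerm]
  rw [mul_left_comm, ← hconv]
  simp only [sumBelow, mul_sum] at hinner ⊢
  rw [sum_comm, sum_congr rfl hinner, sum_sub_distrib]

/-- For `c = evenInvPow 1 + oddInvPow 1` and `b = evenInvPow 1 - oddInvPow 1`, the left side
depends on the innermost weights only through `c - b = 2 * oddInvPow 1`. -/
lemma nestedTerm_signedInvPow_combination (u m : ℕ) :
    nestedTerm (signedInvPow 1 u) (signedInvPow (-1) 1) (signedInvPow (-1) 1) m +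
      nestedTerm (signedInvPow (-1) u) (signedInvPow 1 1) (signedInvPow 1 1) m -
      nestedTerm (signedInvPow (-1) u) (signedInvPow 1 1) (signedInvPow (-1) 1) m -
      nestedTerm (signedInvPow 1 u) (signedInvPow (-1) 1) (signedInvPow 1 1) m =
    4 * nestedTerm (evenInvPow u) (oddInvPow 1) (oddInvPow 1) m -
      4 * nestedTerm (oddInvPow u) (evenInvPow 1) (oddInvPow 1) m := by
  simp only [nestedTerm, funext (signedInvPow_one_left _), funext (signedInvPow_neg_one_left _),
    sumBelow_add, sumBelow_sub, add_mul, sub_mul, mul_add, mul_sub]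
  ring

lemma sq_oddHarmonic (m : ℕ) :
    oddHarmonic m ^ 2 =
      sumBelow (oddInvPow 2) m + 2 * sumBelow (fun k => oddInvPow 1 k * oddHarmonic k) m := by
  simpa only [oddInvPow_sq] using sq_sumBelow (oddInvPow 1) m

/-- The series `∑_{n even} (∑_{k < n, k odd} 1 / k)² / nᵘ`. -/
noncomputable def evenSquareSum (u : ℕ) : ℝ := ∑' n, evenInvPow u n * oddHarmonic n ^ 2

lemma hasSum_evenSquareSum {u : ℕ} (hu : 2 ≤ u) :
    HasSum (fun n => evenInvPow u n * oddHarmonic n ^ 2) (evenSquareSum u) := by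
  refine (summable_mul_of_abs_le_log_sq
    (fun n => abs_le_one_div_pow_of_le hu (abs_evenInvPow_le u n)) fun n => ?_).hasSum
  rw [abs_pow]
  gcongr
  exact abs_sumBelow_le abs_oddInvPow_one_le n

lemma oddInvPow_one_add_le {n : ℕ} (hn : n % 2 = 0) (r : ℕ) :
    oddInvPow 1 (r + n) ≤ oddInvPow 1 r := by
  by_cases hr : r % 2 = 1
  · have hr0 : (0 : ℝ) < r := Nat.cast_pos.2 (by omega)
    simp only [oddInvPow, hr, show (r + n) % 2 = 1 by omega, if_true, pow_one]
    gcongr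
    omega
  · simp [oddInvPow, hr, show ¬(r + n) % 2 = 1 by omega]

lemma hasSum_oddInvPow_sub_shift {n : ℕ} (hn : n % 2 = 0) :
    HasSum (fun r => oddInvPow 1 r - oddInvPow 1 (r + n)) (oddHarmonic n) := by
  rw [← sum_range_eq_sumBelow (oddInvPow_zero 1)]
  exact hasSum_sub_shift tendsto_oddInvPow_one (oddInvPow_one_add_le hn)

lemma hasSum_sumBelow_evenInvPow_mul_sub {u : ℕ} (hu : 2 ≤ u) :
    HasSum (fun m => sumBelow (fun n =>
        evenInvPow u n * oddHarmonic n * (oddInvPow 1 (m - n) - oddInvPow 1 m)) m)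
      (evenSquareSum u) := by
  let F (p : ℕ × ℕ) : ℝ :=
    evenInvPow u p.1 * oddHarmonic p.1 * (oddInvPow 1 p.2 - oddInvPow 1 (p.2 + p.1))
  have hodd (n r : ℕ) (hn : ¬n % 2 = 0) : F (n, r) = 0 := by simp [F, evenInvPow, hn]
  have hF : 0 ≤ F := fun ⟨n, r⟩ => by
    by_cases hn : n % 2 = 0
    · exact mul_nonneg (mul_nonneg (evenInvPow_nonneg u n) (oddHarmonic_nonneg n))
        (sub_nonneg.2 (oddInvPow_one_add_le hn r))
    · exact (hodd n r hn).ge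
  have hrow (n : ℕ) : HasSum (fun r => F (n, r)) (evenInvPow u n * oddHarmonic n ^ 2) := by
    by_cases hn : n % 2 = 0
    · rw [sq, ← mul_assoc]
      exact (hasSum_oddInvPow_sub_shift hn).mul_left _
    · simp [hodd n _ hn, evenInvPow, hn]
  have hedge (m : ℕ) : F (m, 0) = 0 := by
    by_cases hm : m % 2 = 0
    · simp [F, oddInvPow, hm]
    · exact hodd m 0 hm
  refine (hasSum_sum_antidiagonal
    (hasSum_prod_of_nonneg hF hrow (hasSum_evenSquareSum hu))).congr_fun fun m => ?_
  rw [sum_antidiagonal_eq_sumBelow (by simp [F, sumBelow_zero]) (hedge m)]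
  refine sum_congr rfl fun n hn => ?_
  simp only [F, Nat.sub_add_cancel (mem_Ico.1 hn).2.le]

lemma sum_tValue3_one {u : ℕ} (hu : 2 ≤ u) :
    ∑ a ∈ Icc 2 u, tValue3 a (u + 1 - a) 1 = 8 * evenSquareSum u - 2 * tValue3 u 1 1 := by
  have hleft : HasSum _ (∑ a ∈ Icc 2 u, tValue3 a (u + 1 - a) 1) := hasSum_sum fun a ha =>
    hasSum_tValue3 (mem_Icc.1 ha).1 (Nat.le_sub_of_add_le (by grind)) le_rfl
  have hright := ((hasSum_sumBelow_evenInvPow_mul_sub hu).mul_left 8).sub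
    ((hasSum_tValue3 hu le_rfl le_rfl).mul_left 2)
  refine hleft.unique (hright.congr_fun fun m => ?_)
  rw [← mul_sum, sum_nestedTerm_oddInvPow_evenInvPow (by omega)]
  ring

lemma two_mul_tValue2_add_eulerSum3 {u : ℕ} (hu : 2 ≤ u) :
    2 * tValue2 u 2 + 4 * (eulerSum3 u 1 1 1 (-1) (-1) + eulerSum3 u 1 1 (-1) 1 1
        - eulerSum3 u 1 1 (-1) 1 (-1) - eulerSum3 u 1 1 1 (-1) 1) =
      8 * evenSquareSum u - 2 * tValue3 u 1 1 := by
  have hp : |(1 : ℝ)| ≤ 1 := abs_one.le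
  have hn : |(-1 : ℝ)| ≤ 1 := by simp
  have hleft := ((hasSum_tValue2 hu one_le_two).mul_left 2).add
    (((((hasSum_eulerSum3 hu le_rfl le_rfl hp hn hn).add
      (hasSum_eulerSum3 hu le_rfl le_rfl hn hp hp)).sub
      (hasSum_eulerSum3 hu le_rfl le_rfl hn hp hn)).sub
      (hasSum_eulerSum3 hu le_rfl le_rfl hp hn hp)).mul_left 4)
  have hright := ((hasSum_evenSquareSum hu).mul_left 8).sub
    ((hasSum_tValue3 hu le_rfl le_rfl).mul_left 2)
  refine hleft.unique (hright.congr_fun fun m => ?_)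
  rw [nestedTerm_signedInvPow_combination, sq_oddHarmonic]
  simp only [nestedTerm]
  ring

end MultipleTValue

/-- For `w ≥ 4`, with `u = w − 2`:
`∑_{a+b=w−1, a≥2} T(a,b,1) = 2 T(u,2) + 4(ζ(u,1̄,1̄) + ζ(ū,1,1) − ζ(ū,1,1̄) − ζ(u,1̄,1))`. -/
theorem sum_triple_T_last1 (w : ℕ) (hw : 4 ≤ w) :
    ∑ a ∈ Finset.Icc 2 (w - 2), tValue3 a (w - 1 - a) 1
      = 2 * tValue2 (w - 2) 2
        + 4 * (eulerSum3 (w - 2) 1 1 1 (-1) (-1) + eulerSum3 (w - 2) 1 1 (-1) 1 1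
          - eulerSum3 (w - 2) 1 1 (-1) 1 (-1) - eulerSum3 (w - 2) 1 1 1 (-1) 1) := by
  have hu : 2 ≤ w - 2 := by omega
  rw [MultipleTValue.two_mul_tValue2_add_eulerSum3 hu, ← MultipleTValue.sum_tValue3_one hu,
    show w - 2 + 1 = w - 1 by omega]
end

section
/- For every integer w ≥ 4, with u = w−2, the sum formula for triple T-values holds: ∑_{a+b+c=w, a≥2, b,c≥1} T(a,b,c) = (2/3)·T(2)·T(u) − 2·T(u,2) + 4·( ζ(u,1̄,1) − ζ(ū,1,1) + ζ(ū,1,1̄) − ζ(u,1̄,1̄) ). -/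
open Filter

/-!
Write the indices `l > m > n` of a triple `T`-value through their gaps. For fixed indices, the sum
of `1 / (l ^ a * m ^ b * n ^ c)` over `a + b + c = w`, `a ≥ 2`, is by partial fractions an outer
part carrying `1 / l ^ u`, minus a middle part carrying `1 / m ^ u`, plus an inner part carrying
`1 / n ^ u`.

* Reversing the order of the gaps turns the outer part into `T(u, 1, 1)`.
* For fixed `n` the inner part telescopes to a finite sum, which again builds up `T(u, 1, 1)`, plus
  its value `B` in the limiting case without that finite sum. The double series for `T(2) / 2`
  splits into `B` and a companion, and both the companion and the symmetrization of `B` reduce to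
  the same series of odd harmonic numbers. Hence the companion is `2 * B`, and `B = T(2) / 6`.
* Summing the middle part over `l` and `n` gives `∑ O_j ^ 2 / (2 * j) ^ u` with `O_j` the odd
  harmonic number. Expanding the square gives `T(u, 2)` and twice the sum `W` of
  `1 / (l ^ u * m * n)` over `l` even, `m` and `n` odd.

The Euler sums have the combined sign `(1 - (-1) ^ n) * ((-1) ^ m - (-1) ^ l)`, which selects the
indices of `T(u, 1, 1)` and, with the opposite sign, those of `W`.
-/

open Topology Finset

theorem hasSum_prod_of_nonneg {α β : Type*} {f : α × β → ℝ} {g : α → ℝ} {s : ℝ}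
    (hf : ∀ p, 0 ≤ f p) (hfg : ∀ a, HasSum (fun b => f (a, b)) (g a)) (hg : HasSum g s) :
    HasSum f s := by
  have hsum : Summable f := (summable_prod_of_nonneg hf).2
    ⟨fun a => (hfg a).summable, by simpa only [(hfg _).tsum_eq] using hg.summable⟩
  rw [← (hsum.hasSum.prod_fiberwise hfg).unique hg]
  exact hsum.hasSum

section Regrouping

variable {M : Type*} [AddCommMonoid M] [TopologicalSpace M] [ContinuousAdd M] [RegularSpace M]

theorem hasSum_sum_fiber {α γ : Type*} {f : α → M} {s : M} (hf : HasSum f s) (φ : α → γ)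
    (t : γ → Finset α) (ht : ∀ a c, a ∈ t c ↔ φ a = c) :
    HasSum (fun c => ∑ a ∈ t c, f a) s :=
  ((Equiv.sigmaFiberEquiv φ).hasSum_iff.2 hf).sigma fun c =>
    (Equiv.subtypeEquivRight fun a => ht a c).hasSum_iff.1 ((t c).hasSum f)

theorem hasSum_sum_range {f : ℕ → ℕ → M} {s : M}
    (hf : HasSum (fun p : ℕ × ℕ => f (p.1 + p.2 + 1) p.1) s) :
    HasSum (fun i => ∑ j ∈ range i, f i j) s := by
  refine (hasSum_sum_fiber hf (fun p => p.1 + p.2 + 1)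
    (fun i => (range i).image fun j => (j, i - 1 - j)) ?_).congr_fun fun i => ?_
  · rintro ⟨j, q⟩ i
    simp only [mem_image, mem_range, Prod.mk.injEq]
    exact ⟨by rintro ⟨_, _, rfl, rfl⟩; omega, by rintro rfl; exact ⟨j, by omega, rfl, by omega⟩⟩
  · rw [sum_image fun a _ b _ h => congrArg Prod.fst h]
    refine sum_congr rfl fun j hj => ?_
    rw [show j + (i - 1 - j) + 1 = i by grind]

theorem hasSum_sum_range_sum_range {f : ℕ → ℕ → ℕ → M} {s : M}
    (hf : HasSum (fun p : (ℕ × ℕ) × ℕ =>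
      f (p.1.1 + p.1.2 + p.2 + 2) (p.1.1 + p.1.2 + 1) p.1.1) s) :
    HasSum (fun i => ∑ j ∈ range i, ∑ k ∈ range j, f i j k) s := by
  refine (hasSum_sum_fiber hf (fun p => p.1.1 + p.1.2 + p.2 + 2)
    (fun i => ((range i).sigma range).image fun x => ((x.2, x.1 - 1 - x.2), i - 1 - x.1))
    ?_).congr_fun fun i => ?_
  · rintro ⟨⟨k, q⟩, r⟩ i
    simp only [mem_image, mem_sigma, mem_range, Prod.mk.injEq, Sigma.exists]
    constructor
    · rintro ⟨j, _, _, ⟨rfl, rfl⟩, rfl⟩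
      omega
    · rintro rfl
      exact ⟨k + q + 1, k, by omega, ⟨rfl, by omega⟩, by omega⟩
  · rw [sum_image, sum_sigma]
    · refine sum_congr rfl fun j hj => sum_congr rfl fun k hk => ?_
      rw [mem_range] at hj hk
      dsimp only
      congr 1 <;> omega
    · rintro ⟨j, k⟩ h ⟨j', k'⟩ h' heq
      grind

end Regrouping

theorem hasSum_sub_shift {g : ℕ → ℝ} (hg : Antitone g) (h0 : Tendsto g atTop (𝓝 0)) (k : ℕ) :
    HasSum (fun n => g n - g (n + k)) (∑ i ∈ range k, g i) := by
  rw [hasSum_iff_tendsto_nat_of_nonneg fun n => sub_nonneg.2 (hg (Nat.le_add_right n k))]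
  have hpartial : ∀ N, ∑ n ∈ range N, (g n - g (n + k))
      = ∑ i ∈ range k, g i - ∑ i ∈ range k, g (N + i) := fun N => by
    rw [sum_sub_distrib, sub_eq_sub_iff_add_eq_add, ← sum_range_add, add_comm N, sum_range_add]
    simp only [add_comm]
  have htail : Tendsto (fun N => ∑ i ∈ range k, g (N + i)) atTop (𝓝 0) := by
    simpa using tendsto_finsetSum (range k) fun i _ => h0.comp (tendsto_add_atTop_nat i)
  simpa only [hpartial, sub_zero] using tendsto_const_nhds.sub htail

theorem hasSum_one_div_sub_one_div {a c : ℝ} (ha : 0 < a) (hc : 0 < c) (k : ℕ) :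
    HasSum (fun n : ℕ => 1 / (a * n + c) - 1 / (a * (n + k : ℕ) + c))
      (∑ i ∈ range k, 1 / (a * i + c)) := by
  refine hasSum_sub_shift (g := fun n : ℕ => 1 / (a * n + c)) (fun i j hij => ?_) ?_ k
  · dsimp only
    gcongr
  · simp only [one_div]
    exact tendsto_inv_atTop_zero.comp (tendsto_atTop_add_const_right _ _
      (tendsto_natCast_atTop_atTop.const_mul_atTop ha))

theorem hasSum_one_div_sub_one_div_add {a c : ℝ} (ha : 0 < a) (hc : 0 < c) :
    HasSum (fun n : ℕ => 1 / (a * n + c) - 1 / (a * n + c + a)) (1 / c) := by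
  have h := hasSum_one_div_sub_one_div ha hc 1
  simp only [range_one, sum_singleton, Nat.cast_zero, mul_zero, zero_add] at h
  refine h.congr_fun fun n => ?_
  rw [Nat.cast_add_one, mul_add_one, add_right_comm]

theorem sum_one_div_pow_mul_pow {K : Type*} [Field K] {x y : K} (hx : x ≠ 0) (hy : y ≠ 0)
    (hxy : x ≠ y) (N : ℕ) :
    ∑ b ∈ Icc 1 (N + 1), 1 / (x ^ b * y ^ (N + 2 - b))
      = (1 / y ^ (N + 1) - 1 / x ^ (N + 1)) / (x - y) := by
  have hgeom := geom_sum₂_mul x⁻¹ y⁻¹ (N + 1)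
  have hinv : x⁻¹ - y⁻¹ = -(x⁻¹ * y⁻¹ * (x - y)) := by
    field_simp
    ring
  rw [hinv] at hgeom
  have hsum : ∑ b ∈ Icc 1 (N + 1), 1 / (x ^ b * y ^ (N + 2 - b))
      = x⁻¹ * y⁻¹ * ∑ i ∈ range (N + 1), x⁻¹ ^ i * y⁻¹ ^ (N + 1 - 1 - i) := by
    rw [← Ico_add_one_right_eq_Icc, sum_Ico_eq_sum_range, mul_sum, Nat.add_sub_cancel]
    refine sum_congr rfl fun i hi => ?_
    rw [show N + 2 - (1 + i) = N - i + 1 by grind, add_comm 1 i, add_tsub_cancel_right,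
      one_div, mul_inv, ← inv_pow, ← inv_pow]
    ring
  rw [hsum, eq_div_iff (sub_ne_zero.2 hxy), one_div, one_div, ← inv_pow, ← inv_pow]
  linear_combination -hgeom

theorem sum_one_div_pow_mul_pow_mul_pow {K : Type*} [Field K] {l m n : K} (hl : l ≠ 0)
    (hm : m ≠ 0) (hn : n ≠ 0) (hlm : l ≠ m) (hln : l ≠ n) (hmn : m ≠ n) (v : ℕ) :
    ∑ a ∈ Icc 2 (v + 2), ∑ b ∈ Icc 1 (v + 4 - a - 1), 1 / (l ^ a * m ^ b * n ^ (v + 4 - a - b))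
      = 1 / (l ^ (v + 2) * ((l - m) * (l - n)))
        - 1 / m ^ (v + 2) * ((1 / (l - m) - 1 / l) / (m - n))
        + 1 / n ^ (v + 2) * ((1 / (l - n) - 1 / l) / (m - n)) := by
  have hinner : ∀ a ∈ Icc 1 (v + 1),
      ∑ b ∈ Icc 1 (v + 4 - (a + 1) - 1), 1 / (l ^ (a + 1) * m ^ b * n ^ (v + 4 - (a + 1) - b))
        = 1 / (l * (m - n)) * (1 / (l ^ a * n ^ (v + 2 - a)) - 1 / (l ^ a * m ^ (v + 2 - a))) :=
    fun a ha => by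
      have h := sum_one_div_pow_mul_pow hm hn hmn (v + 1 - a)
      rw [show v + 1 - a + 1 = v + 2 - a by grind, show v + 1 - a + 2 = v + 3 - a by grind] at h
      simp only [show v + 4 - (a + 1) = v + 3 - a by omega, show v + 3 - a - 1 = v + 2 - a by omega,
        mul_assoc (l ^ (a + 1)), ← one_div_mul_one_div (l ^ (a + 1)), ← mul_sum, h]
      have := sub_ne_zero.2 hmn
      field_simp
      ring
  have hshift : Icc 2 (v + 2) = (Icc 1 (v + 1)).map (addRightEmbedding 1) := by
    rw [map_add_right_Icc]
  rw [hshift, sum_map]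
  simp only [addRightEmbedding_apply]
  rw [sum_congr rfl hinner, ← mul_sum, sum_sub_distrib, sum_one_div_pow_mul_pow hl hn hln,
    sum_one_div_pow_mul_pow hl hm hlm]
  have := sub_ne_zero.2 hmn
  have := sub_ne_zero.2 hlm
  have := sub_ne_zero.2 hln
  field_simp
  ring

theorem summable_div_add_one_sq {ι : Type*} {g m : ι → ℝ} (hg : ∀ i, 0 ≤ g i)
    (hm : ∀ i, 0 < m i) (h : Summable fun i => g i / m i) :
    Summable fun p : ι × ℕ => g p.1 / (m p.1 + p.2 + 1) ^ 2 := by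
  have hpos : ∀ i (r : ℕ), 0 < m i + r := fun i r => add_pos_of_pos_of_nonneg (hm i) r.cast_nonneg
  have htel : ∀ i, HasSum (fun r : ℕ => g i * (1 / (m i + r) - 1 / (m i + r + 1))) (g i / m i) :=
    fun i => by
      simpa only [one_mul, add_comm _ (m i), mul_one_div]
        using (hasSum_one_div_sub_one_div_add one_pos (hm i)).mul_left (g i)
  have hle : ∀ i (r : ℕ), g i / (m i + r + 1) ^ 2 ≤ g i * (1 / (m i + r) - 1 / (m i + r + 1)) :=
    fun i r => by
      have := hpos i r
      rw [div_sub_div _ _ (by positivity) (by positivity), div_eq_mul_one_div]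
      refine mul_le_mul_of_nonneg_left ?_ (hg i)
      rw [one_mul, mul_one, add_sub_cancel_left]
      gcongr
      nlinarith
  have hnonneg : ∀ i (r : ℕ), 0 ≤ g i / (m i + r + 1) ^ 2 := fun i r =>
    div_nonneg (hg i) (sq_nonneg _)
  exact .of_nonneg_of_le (fun p => hnonneg p.1 p.2) (fun p => hle p.1 p.2)
    (hasSum_prod_of_nonneg (fun p => (hnonneg p.1 p.2).trans (hle p.1 p.2)) htel h.hasSum).summable

/-! ### Gap coordinates

Indices `n = k + 1`, `m = n + q + 1`, `l = m + r + 1` are encoded as `(k, q)` or `((k, q), r)`.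
Prescribed parities of `n`, `m`, `l` are prescribed parities of `k`, `q`, `r`. -/

theorem tendsto_sum_Icc {M : Type*} [AddCommMonoid M] [TopologicalSpace M] {f : ℕ → M} {s : M}
    (hf : HasSum (fun i => f (i + 1)) s) :
    Tendsto (fun N => ∑ n ∈ Icc 1 N, f n) atTop (𝓝 s) := by
  refine hf.tendsto_sum_nat.congr fun N => ?_
  rw [range_eq_Ico, sum_Ico_add' f 0 N 1, zero_add, Ico_add_one_right_eq_Icc]

section PartialSums

variable {M : Type*} [AddCommMonoid M] [TopologicalSpace M] [ContinuousAdd M] [RegularSpace M]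

theorem tendsto_sum_Icc_sum_Ico {f : ℕ → ℕ → M} {s : M}
    (hf : HasSum (fun p : ℕ × ℕ => f (p.1 + p.2 + 2) (p.1 + 1)) s) :
    Tendsto (fun N => ∑ m ∈ Icc 1 N, ∑ n ∈ Ico 1 m, f m n) atTop (𝓝 s) := by
  refine tendsto_sum_Icc ((hasSum_sum_range (f := fun i j => f (i + 1) (j + 1)) hf).congr_fun
    fun i => ?_)
  rw [range_eq_Ico, sum_Ico_add' (f (i + 1)) 0 i 1, zero_add]

theorem tendsto_sum_Icc_sum_Ico_sum_Ico {f : ℕ → ℕ → ℕ → M} {s : M}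
    (hf : HasSum (fun p : (ℕ × ℕ) × ℕ =>
      f (p.1.1 + p.1.2 + p.2 + 3) (p.1.1 + p.1.2 + 2) (p.1.1 + 1)) s) :
    Tendsto (fun N => ∑ l ∈ Icc 1 N, ∑ m ∈ Ico 1 l, ∑ n ∈ Ico 1 m, f l m n) atTop (𝓝 s) := by
  refine tendsto_sum_Icc ((hasSum_sum_range_sum_range
    (f := fun i j k => f (i + 1) (j + 1) (k + 1)) hf).congr_fun fun i => ?_)
  simp only [range_eq_Ico, sum_Ico_add' (f _ _) 0 _ 1, zero_add]
  rw [sum_Ico_add' (fun m => ∑ n ∈ Ico 1 m, f (i + 1) m n) 0 i 1, zero_add]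

end PartialSums

section Parity

variable {M : Type*} [AddCommMonoid M] [TopologicalSpace M]

theorem hasSum_ite_odd {f : ℕ → M} {s : M} (hf : HasSum (fun k => f (2 * k + 1)) s) :
    HasSum (fun k => if (k + 1) % 2 = 1 then f (k + 1) else 0) s := by
  have hinj : Function.Injective fun k : ℕ => 2 * k := fun _ _ => by simp
  refine (hinj.hasSum_iff fun k hk => if_neg fun h => hk ⟨k / 2, ?_⟩).1 (hf.congr_fun fun k => ?_)
  · grind
  · simp

theorem hasSum_ite_even_odd {f : ℕ → ℕ → M} {s : M}
    (hf : HasSum (fun p : ℕ × ℕ => f (2 * (p.1 + p.2) + 2) (2 * p.1 + 1)) s) :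
    HasSum (fun p : ℕ × ℕ => if (p.1 + p.2 + 2) % 2 = 0 ∧ (p.1 + 1) % 2 = 1 then
      f (p.1 + p.2 + 2) (p.1 + 1) else 0) s := by
  have hinj : Function.Injective fun p : ℕ × ℕ => (2 * p.1, 2 * p.2) := fun _ _ => by
    simp [Prod.ext_iff]
  refine (hinj.hasSum_iff fun p hp => if_neg fun h => hp ⟨(p.1 / 2, p.2 / 2), ?_⟩).1
    (hf.congr_fun fun p => ?_)
  · ext <;> grind
  · simp only [Function.comp_apply, ← mul_add]
    rw [if_pos (by omega)]

theorem hasSum_ite_odd_even_odd {f : ℕ → ℕ → ℕ → M} {s : M}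
    (hf : HasSum (fun p : (ℕ × ℕ) × ℕ =>
      f (2 * (p.1.1 + p.1.2 + p.2) + 3) (2 * (p.1.1 + p.1.2) + 2) (2 * p.1.1 + 1)) s) :
    HasSum (fun p : (ℕ × ℕ) × ℕ =>
      if (p.1.1 + p.1.2 + p.2 + 3) % 2 = 1 ∧ (p.1.1 + p.1.2 + 2) % 2 = 0 ∧ (p.1.1 + 1) % 2 = 1 then
        f (p.1.1 + p.1.2 + p.2 + 3) (p.1.1 + p.1.2 + 2) (p.1.1 + 1) else 0) s := by
  have hinj : Function.Injective fun p : (ℕ × ℕ) × ℕ => ((2 * p.1.1, 2 * p.1.2), 2 * p.2) :=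
    fun _ _ => by simp [Prod.ext_iff]
  refine (hinj.hasSum_iff fun p hp =>
    if_neg fun h => hp ⟨((p.1.1 / 2, p.1.2 / 2), p.2 / 2), ?_⟩).1 (hf.congr_fun fun p => ?_)
  · ext <;> grind
  · simp only [Function.comp_apply, ← mul_add]
    rw [if_pos (by omega)]

theorem hasSum_ite_even_odd_odd {f : ℕ → ℕ → ℕ → M} {s : M}
    (hf : HasSum (fun p : (ℕ × ℕ) × ℕ =>
      f (2 * (p.1.1 + p.1.2 + p.2) + 4) (2 * (p.1.1 + p.1.2) + 3) (2 * p.1.1 + 1)) s) :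
    HasSum (fun p : (ℕ × ℕ) × ℕ =>
      if (p.1.1 + p.1.2 + p.2 + 3) % 2 = 0 ∧ (p.1.1 + p.1.2 + 2) % 2 = 1 ∧ (p.1.1 + 1) % 2 = 1 then
        f (p.1.1 + p.1.2 + p.2 + 3) (p.1.1 + p.1.2 + 2) (p.1.1 + 1) else 0) s := by
  have hinj : Function.Injective fun p : (ℕ × ℕ) × ℕ => ((2 * p.1.1, 2 * p.1.2 + 1), 2 * p.2) :=
    fun _ _ => by simp [Prod.ext_iff]
  refine (hinj.hasSum_iff fun p hp =>
    if_neg fun h => hp ⟨((p.1.1 / 2, p.1.2 / 2), p.2 / 2), ?_⟩).1 (hf.congr_fun fun p => ?_)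
  · ext <;> grind
  · dsimp only [Function.comp_apply]
    rw [if_pos (by omega)]
    congr 1 <;> ring

end Parity

theorem summable_one_div_gap {a : ℕ} (ha : 2 ≤ a) :
    Summable fun k : ℕ => 1 / ((k + 1 : ℕ) : ℝ) ^ a :=
  (summable_nat_add_iff (f := fun n : ℕ => 1 / (n : ℝ) ^ a) 1).2
    (Real.summable_one_div_nat_pow.2 ha)

theorem summable_one_div_gap₂ {a b : ℕ} (ha : 2 ≤ a) (hb : 1 ≤ b) :
    Summable fun p : ℕ × ℕ => 1 / (((p.1 + p.2 + 2 : ℕ) : ℝ) ^ a * ((p.1 + 1 : ℕ) : ℝ) ^ b) := by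
  have h := summable_div_add_one_sq (g := fun k : ℕ => 1 / ((k + 1 : ℕ) : ℝ))
    (m := fun k => ((k + 1 : ℕ) : ℝ)) (fun k => by positivity) (fun k => by positivity)
    ((summable_one_div_gap le_rfl).congr fun k => by field_simp)
  refine .of_nonneg_of_le (fun p => by positivity) (fun p => ?_) h
  rw [div_div, mul_comm, show ((p.1 + 1 : ℕ) : ℝ) + p.2 + 1 = ((p.1 + p.2 + 2 : ℕ) : ℝ) by
    push_cast; ring]
  gcongr
  · exact le_self_pow₀ (by norm_cast; omega) (by omega)
  · norm_cast; omega

theorem summable_one_div_gap₃ {a b c : ℕ} (ha : 2 ≤ a) (hb : 1 ≤ b) (hc : 1 ≤ c) :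
    Summable fun p : (ℕ × ℕ) × ℕ => 1 / (((p.1.1 + p.1.2 + p.2 + 3 : ℕ) : ℝ) ^ a
      * ((p.1.1 + p.1.2 + 2 : ℕ) : ℝ) ^ b * ((p.1.1 + 1 : ℕ) : ℝ) ^ c) := by
  have h := summable_div_add_one_sq
    (g := fun p : ℕ × ℕ => 1 / (((p.1 + p.2 + 2 : ℕ) : ℝ) * ((p.1 + 1 : ℕ) : ℝ)))
    (m := fun p => ((p.1 + p.2 + 2 : ℕ) : ℝ)) (fun p => by positivity) (fun p => by positivity)
    ((summable_one_div_gap₂ le_rfl le_rfl).congr fun p => by field_simp)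
  refine .of_nonneg_of_le (fun p => by positivity) (fun p => ?_) h
  rw [div_div, mul_comm _ ((_ : ℝ) ^ 2), ← mul_assoc,
    show ((p.1.1 + p.1.2 + 2 : ℕ) : ℝ) + p.2 + 1 = ((p.1.1 + p.1.2 + p.2 + 3 : ℕ) : ℝ) by
      push_cast; ring]
  gcongr
  · norm_cast; omega
  · exact le_self_pow₀ (by norm_cast; omega) (by omega)
  · exact le_self_pow₀ (by norm_cast; omega) (by omega)

theorem hasSum_tValue1 {s : ℕ} (hs : 2 ≤ s) :
    HasSum (fun k : ℕ => 1 / (2 * (k : ℝ) + 1) ^ s) (tValue1 s / 2) := by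
  have hinj : Function.Injective fun k : ℕ => 2 * k := fun _ _ => by simp
  have hsum : Summable fun k : ℕ => 2 / ((2 * k + 1 : ℕ) : ℝ) ^ s :=
    (((summable_one_div_gap hs).comp_injective hinj).mul_left 2).congr fun k => mul_one_div _ _
  have hT : tValue1 s = ∑' k : ℕ, 2 / ((2 * k + 1 : ℕ) : ℝ) ^ s :=
    (tendsto_sum_Icc (f := fun n => if n % 2 = 1 then 2 / (n : ℝ) ^ s else 0)
      (hasSum_ite_odd (f := fun n => 2 / (n : ℝ) ^ s) hsum.hasSum)).limUnder_eq
  rw [hT]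
  refine (hsum.hasSum.div_const 2).congr_fun fun k => ?_
  push_cast
  ring

theorem hasSum_tValue2 {a b : ℕ} (ha : 2 ≤ a) (hb : 1 ≤ b) :
    HasSum (fun p : ℕ × ℕ => 1 / ((2 * (p.1 + p.2 : ℝ) + 2) ^ a * (2 * (p.1 : ℝ) + 1) ^ b))
      (tValue2 a b / 4) := by
  have hinj : Function.Injective fun p : ℕ × ℕ => (2 * p.1, 2 * p.2) := fun _ _ => by
    simp [Prod.ext_iff]
  have hsum : Summable fun p : ℕ × ℕ =>
      4 / (((2 * (p.1 + p.2) + 2 : ℕ) : ℝ) ^ a * ((2 * p.1 + 1 : ℕ) : ℝ) ^ b) :=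
    (((summable_one_div_gap₂ ha hb).comp_injective hinj).mul_left 4).congr fun p => by
      simp only [Function.comp_apply, mul_one_div, mul_add]
  have hT : tValue2 a b = ∑' p : ℕ × ℕ,
      4 / (((2 * (p.1 + p.2) + 2 : ℕ) : ℝ) ^ a * ((2 * p.1 + 1 : ℕ) : ℝ) ^ b) :=
    (tendsto_sum_Icc_sum_Ico (f := fun m n =>
      if m % 2 = 0 ∧ n % 2 = 1 then 4 / ((m : ℝ) ^ a * (n : ℝ) ^ b) else 0)
      (hasSum_ite_even_odd (f := fun m n => 4 / ((m : ℝ) ^ a * (n : ℝ) ^ b))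
        hsum.hasSum)).limUnder_eq
  rw [hT]
  refine (hsum.hasSum.div_const 4).congr_fun fun p => ?_
  push_cast
  ring

theorem hasSum_tValue3 {a b c : ℕ} (ha : 2 ≤ a) (hb : 1 ≤ b) (hc : 1 ≤ c) :
    HasSum (fun p : (ℕ × ℕ) × ℕ => 1 / ((2 * (p.1.1 + p.1.2 + p.2 : ℝ) + 3) ^ a
      * (2 * (p.1.1 + p.1.2 : ℝ) + 2) ^ b * (2 * (p.1.1 : ℝ) + 1) ^ c)) (tValue3 a b c / 8) := by
  have hinj : Function.Injective fun p : (ℕ × ℕ) × ℕ => ((2 * p.1.1, 2 * p.1.2), 2 * p.2) :=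
    fun _ _ => by simp [Prod.ext_iff]
  have hsum : Summable fun p : (ℕ × ℕ) × ℕ =>
      8 / (((2 * (p.1.1 + p.1.2 + p.2) + 3 : ℕ) : ℝ) ^ a
        * ((2 * (p.1.1 + p.1.2) + 2 : ℕ) : ℝ) ^ b * ((2 * p.1.1 + 1 : ℕ) : ℝ) ^ c) :=
    (((summable_one_div_gap₃ ha hb hc).comp_injective hinj).mul_left 8).congr fun p => by
      simp only [Function.comp_apply, mul_one_div, mul_add]
  have hT : tValue3 a b c = ∑' p : (ℕ × ℕ) × ℕ,
      8 / (((2 * (p.1.1 + p.1.2 + p.2) + 3 : ℕ) : ℝ) ^ a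
        * ((2 * (p.1.1 + p.1.2) + 2 : ℕ) : ℝ) ^ b * ((2 * p.1.1 + 1 : ℕ) : ℝ) ^ c) :=
    (tendsto_sum_Icc_sum_Ico_sum_Ico (f := fun l m n =>
      if l % 2 = 1 ∧ m % 2 = 0 ∧ n % 2 = 1 then
        8 / ((l : ℝ) ^ a * (m : ℝ) ^ b * (n : ℝ) ^ c) else 0)
      (hasSum_ite_odd_even_odd
        (f := fun l m n => 8 / ((l : ℝ) ^ a * (m : ℝ) ^ b * (n : ℝ) ^ c))
        hsum.hasSum)).limUnder_eq
  rw [hT]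
  refine (hsum.hasSum.div_const 8).congr_fun fun p => ?_
  push_cast
  ring

theorem hasSum_eulerSum3 {a b c : ℕ} (ha : 2 ≤ a) (hb : 1 ≤ b) (hc : 1 ≤ c) {e₁ e₂ e₃ : ℝ}
    (h₁ : |e₁| = 1) (h₂ : |e₂| = 1) (h₃ : |e₃| = 1) :
    HasSum (fun p : (ℕ × ℕ) × ℕ => e₁ ^ (p.1.1 + p.1.2 + p.2 + 3) * e₂ ^ (p.1.1 + p.1.2 + 2)
        * e₃ ^ (p.1.1 + 1) / (((p.1.1 + p.1.2 + p.2 + 3 : ℕ) : ℝ) ^ a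
          * ((p.1.1 + p.1.2 + 2 : ℕ) : ℝ) ^ b * ((p.1.1 + 1 : ℕ) : ℝ) ^ c))
      (eulerSum3 a b c e₁ e₂ e₃) := by
  have hsum : Summable fun p : (ℕ × ℕ) × ℕ => e₁ ^ (p.1.1 + p.1.2 + p.2 + 3)
      * e₂ ^ (p.1.1 + p.1.2 + 2) * e₃ ^ (p.1.1 + 1) / (((p.1.1 + p.1.2 + p.2 + 3 : ℕ) : ℝ) ^ a
        * ((p.1.1 + p.1.2 + 2 : ℕ) : ℝ) ^ b * ((p.1.1 + 1 : ℕ) : ℝ) ^ c) := by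
    refine .of_norm_bounded (summable_one_div_gap₃ ha hb hc) fun p => le_of_eq ?_
    simp only [norm_div, norm_mul, norm_pow, Real.norm_eq_abs, h₁, h₂, h₃, one_pow, mul_one,
      Nat.abs_cast]
  have hE : eulerSum3 a b c e₁ e₂ e₃ = _ := (tendsto_sum_Icc_sum_Ico_sum_Ico
    (f := fun l m n => e₁ ^ l * e₂ ^ m * e₃ ^ n / ((l : ℝ) ^ a * (m : ℝ) ^ b * (n : ℝ) ^ c))
    hsum.hasSum).limUnder_eq
  rw [hE]
  exact hsum.hasSum

/-- The sum of `1 / (l ^ u * m * n)` over integers `l > m > n > 0` with `l` even and `m`, `n` odd,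
written in the gap coordinates `n = 2k + 1`, `m = n + 2q + 2`, `l = m + 2r + 1`. -/
noncomputable def evenOddOddSum (u : ℕ) : ℝ :=
  ∑' p : (ℕ × ℕ) × ℕ, 1 / ((2 * (p.1.1 + p.1.2 + p.2 : ℝ) + 4) ^ u
    * (2 * (p.1.1 + p.1.2 : ℝ) + 3) * (2 * (p.1.1 : ℝ) + 1))

theorem hasSum_evenOddOddSum {u : ℕ} (hu : 2 ≤ u) :
    HasSum (fun p : (ℕ × ℕ) × ℕ => 1 / ((2 * (p.1.1 + p.1.2 + p.2 : ℝ) + 4) ^ u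
      * (2 * (p.1.1 + p.1.2 : ℝ) + 3) * (2 * (p.1.1 : ℝ) + 1))) (evenOddOddSum u) := by
  have hinj : Function.Injective fun p : (ℕ × ℕ) × ℕ => ((2 * p.1.1, 2 * p.1.2 + 1), 2 * p.2) :=
    fun _ _ => by simp [Prod.ext_iff]
  refine (((summable_one_div_gap₃ hu le_rfl le_rfl).comp_injective hinj).congr fun p => ?_).hasSum
  simp only [Function.comp_apply]
  push_cast
  ring

theorem neg_one_pow_combination (l m n : ℕ) :
    (-1 : ℝ) ^ m - (-1) ^ l + (-1) ^ l * (-1) ^ n - (-1) ^ m * (-1) ^ n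
      = 4 * (if l % 2 = 1 ∧ m % 2 = 0 ∧ n % 2 = 1 then 1 else 0)
        - 4 * (if l % 2 = 0 ∧ m % 2 = 1 ∧ n % 2 = 1 then 1 else 0) := by
  have hpow : ∀ i : ℕ, (-1 : ℝ) ^ i = if i % 2 = 1 then -1 else 1 := fun i => by
    rcases Nat.mod_two_eq_zero_or_one i with h | h
    · rw [(Nat.even_iff.2 h).neg_one_pow, h, if_neg zero_ne_one]
    · rw [(Nat.odd_iff.2 h).neg_one_pow, if_pos h]
  simp only [hpow]
  rcases Nat.mod_two_eq_zero_or_one l with hl | hl <;>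
    rcases Nat.mod_two_eq_zero_or_one m with hm | hm <;>
    rcases Nat.mod_two_eq_zero_or_one n with hn | hn <;>
    norm_num [hl, hm, hn]

theorem eulerSum3_combination_eq {u : ℕ} (hu : 2 ≤ u) :
    eulerSum3 u 1 1 1 (-1) 1 - eulerSum3 u 1 1 (-1) 1 1
        + eulerSum3 u 1 1 (-1) 1 (-1) - eulerSum3 u 1 1 1 (-1) (-1)
      = tValue3 u 1 1 / 2 - 4 * evenOddOddSum u := by
  have hE (e₁ e₂ e₃ : ℝ) (h₁ : |e₁| = 1) (h₂ : |e₂| = 1) (h₃ : |e₃| = 1) :=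
    hasSum_eulerSum3 hu le_rfl le_rfl h₁ h₂ h₃
  have hT := hasSum_ite_odd_even_odd (f := fun l m n => 1 / ((l : ℝ) ^ u * m * n))
    ((hasSum_tValue3 hu le_rfl le_rfl).congr_fun fun p => by push_cast; ring)
  have hW := hasSum_ite_even_odd_odd (f := fun l m n => 1 / ((l : ℝ) ^ u * m * n))
    ((hasSum_evenOddOddSum hu).congr_fun fun p => by push_cast; ring)
  have hleft := (((hE 1 (-1) 1 (by simp) (by simp) (by simp)).sub
    (hE (-1) 1 1 (by simp) (by simp) (by simp))).add
    (hE (-1) 1 (-1) (by simp) (by simp) (by simp))).sub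
    (hE 1 (-1) (-1) (by simp) (by simp) (by simp))
  rw [show tValue3 u 1 1 / 2 = 4 * (tValue3 u 1 1 / 8) by ring]
  refine hleft.unique (((hT.mul_left 4).sub (hW.mul_left 4)).congr_fun fun p => ?_)
  generalize p.1.1 + p.1.2 + p.2 + 3 = l, p.1.1 + p.1.2 + 2 = m, p.1.1 + 1 = n
  simp only [← boole_mul _ (1 / ((l : ℝ) ^ u * m * n)), one_pow, pow_one]
  linear_combination (1 / ((l : ℝ) ^ u * m * n)) * neg_one_pow_combination l m n

/-! ### Odd harmonic numbers -/

/-- The odd harmonic number `1 + 1/3 + ⋯ + 1/(2j - 1)`, a sum of `j` terms. -/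
noncomputable def oddHarmonic (j : ℕ) : ℝ :=
  ∑ i ∈ range j, 1 / (2 * (i : ℝ) + 1)

theorem hasSum_one_div_sub_eq_oddHarmonic (j : ℕ) :
    HasSum (fun n : ℕ => 1 / (2 * (n : ℝ) + 1) - 1 / (2 * (n + j : ℝ) + 1)) (oddHarmonic j) :=
  (hasSum_one_div_sub_one_div two_pos one_pos j).congr_fun fun n => by push_cast; rfl

theorem hasSum_one_div_odd_mul_odd (j : ℕ) :
    HasSum (fun n : ℕ => 1 / ((2 * (n : ℝ) + 1) * (2 * (n + j : ℝ) + 3)))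
      (oddHarmonic (j + 1) / (2 * j + 2)) := by
  refine ((hasSum_one_div_sub_eq_oddHarmonic (j + 1)).div_const _).congr_fun fun n => ?_
  push_cast
  field_simp
  ring

theorem oddHarmonic_sq (j : ℕ) :
    oddHarmonic j ^ 2 = ∑ i ∈ range j, 1 / (2 * (i : ℝ) + 1) ^ 2
      + 2 * ∑ i ∈ range j, ∑ k ∈ range i, 1 / ((2 * (i : ℝ) + 1) * (2 * (k : ℝ) + 1)) := by
  induction j with
  | zero => simp [oddHarmonic]
  | succ j ih =>
    have hinner : ∑ k ∈ range j, 1 / ((2 * (j : ℝ) + 1) * (2 * (k : ℝ) + 1))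
        = 1 / (2 * j + 1) * oddHarmonic j := by
      simp only [oddHarmonic, mul_sum, one_div_mul_one_div]
    have hsucc : oddHarmonic (j + 1) = oddHarmonic j + 1 / (2 * j + 1) := sum_range_succ _ _
    rw [sum_range_succ, sum_range_succ, hinner, hsucc, ← one_div_pow]
    linear_combination ih

theorem hasSum_tValue1_two_div_two :
    HasSum (fun p : ℕ × ℕ => 1 / (2 * (p.1 : ℝ) + 1)
      * (1 / (2 * (p.1 + p.2 : ℝ) + 1) - 1 / (2 * (p.1 + p.2 : ℝ) + 3))) (tValue1 2 / 2) := by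
  refine hasSum_prod_of_nonneg (fun p => ?_) (fun q => ?_) (hasSum_tValue1 le_rfl)
  · exact mul_nonneg (by positivity) (sub_nonneg.2 (by gcongr; norm_num))
  · rw [sq, ← one_div_mul_one_div]
    refine ((hasSum_one_div_sub_one_div_add (c := 2 * (q : ℝ) + 1) two_pos
      (by positivity)).mul_left _).congr_fun fun r => ?_
    ring_nf

theorem hasSum_oddHarmonic_of_hasSum_sub_odd {s : ℝ}
    (hs : HasSum (fun p : ℕ × ℕ => 1 / (2 * (p.1 : ℝ) + 1)
      * (1 / (2 * (p.1 + p.2 : ℝ) + 2) - 1 / (2 * (p.1 + p.2 : ℝ) + 3))) s) :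
    HasSum (fun i : ℕ => oddHarmonic (i + 1) / ((2 * (i : ℝ) + 1) * (2 * i + 2))) (2 * s) := by
  -- Adding the term at `(r, q)` to the one at `(q, r)` cancels the factor `2 * (q + r) + 2`.
  have hswap := (Equiv.prodComm ℕ ℕ).hasSum_iff.2 hs
  have hsym : HasSum (fun p : ℕ × ℕ => 1 / (2 * (p.1 : ℝ) + 1)
      * (1 / ((2 * (p.2 : ℝ) + 1) * (2 * (p.2 + p.1 : ℝ) + 3)))) (2 * s) := by
    rw [two_mul]
    refine (hs.add hswap).congr_fun fun p => ?_
    simp only [Function.comp_apply, Equiv.prodComm_apply, Prod.fst_swap, Prod.snd_swap]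
    field_simp
    ring
  refine (hsym.prod_fiberwise fun q =>
    (hasSum_one_div_odd_mul_odd q).mul_left (1 / (2 * (q : ℝ) + 1))).congr_fun fun i => ?_
  field_simp

theorem hasSum_oddHarmonic_of_hasSum_sub_even {s : ℝ}
    (hs : HasSum (fun p : ℕ × ℕ => 1 / (2 * (p.1 : ℝ) + 1)
      * (1 / (2 * (p.1 + p.2 : ℝ) + 1) - 1 / (2 * (p.1 + p.2 : ℝ) + 2))) s) :
    HasSum (fun i : ℕ => oddHarmonic (i + 1) / ((2 * (i : ℝ) + 1) * (2 * i + 2))) s := by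
  -- At `i = 0` the summand divides by zero, but there the sum over `j` is empty.
  have hgroup := hasSum_sum_range (f := fun i j => 1 / (2 * (j : ℝ) + 1)
    * (1 / (2 * (i : ℝ) - 1) - 1 / (2 * (i : ℝ)))) (hs.congr_fun fun p => by push_cast; ring_nf)
  have hshift := (hasSum_nat_add_iff' 1).2 hgroup
  simp only [range_one, sum_singleton, range_zero, sum_empty, zero_mul, sub_zero,
    ← sum_mul] at hshift
  refine hshift.congr_fun fun i => ?_
  rw [← oddHarmonic]
  push_cast
  rw [show 2 * ((i : ℝ) + 1) - 1 = 2 * i + 1 by ring]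
  field_simp
  ring

theorem hasSum_tValue1_two_div_six :
    HasSum (fun p : ℕ × ℕ => 1 / (2 * (p.1 : ℝ) + 1)
      * (1 / (2 * (p.1 + p.2 : ℝ) + 2) - 1 / (2 * (p.1 + p.2 : ℝ) + 3))) (tValue1 2 / 6) := by
  set d₁ := fun p : ℕ × ℕ => 1 / (2 * (p.1 : ℝ) + 1)
    * (1 / (2 * (p.1 + p.2 : ℝ) + 2) - 1 / (2 * (p.1 + p.2 : ℝ) + 3)) with hd₁
  set d₂ := fun p : ℕ × ℕ => 1 / (2 * (p.1 : ℝ) + 1)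
    * (1 / (2 * (p.1 + p.2 : ℝ) + 1) - 1 / (2 * (p.1 + p.2 : ℝ) + 2)) with hd₂
  have hadd : HasSum (fun p => d₁ p + d₂ p) (tValue1 2 / 2) :=
    hasSum_tValue1_two_div_two.congr_fun fun p => by simp only [hd₁, hd₂]; ring
  have h₁ : ∀ p, 0 ≤ d₁ p := fun p =>
    mul_nonneg (by positivity) (sub_nonneg.2 (by gcongr; norm_num))
  have h₂ : ∀ p, 0 ≤ d₂ p := fun p =>
    mul_nonneg (by positivity) (sub_nonneg.2 (by gcongr; norm_num))
  obtain ⟨s₁, hs₁⟩ := hadd.summable.of_nonneg_of_le h₁ fun p => le_add_of_nonneg_right (h₂ p)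
  obtain ⟨s₂, hs₂⟩ := hadd.summable.of_nonneg_of_le h₂ fun p => le_add_of_nonneg_left (h₁ p)
  have hsum : tValue1 2 / 2 = s₁ + s₂ := hadd.unique (hs₁.add hs₂)
  have hdouble : s₂ = 2 * s₁ := (hasSum_oddHarmonic_of_hasSum_sub_even hs₂).unique
    (hasSum_oddHarmonic_of_hasSum_sub_odd hs₁)
  rwa [show tValue1 2 / 6 = s₁ by linarith]

theorem hasSum_oddHarmonic_increment (k : ℕ) :
    HasSum (fun p : ℕ × ℕ => 1 / (2 * (p.1 : ℝ) + 1)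
      * (1 / (2 * (p.1 + p.2 + k : ℝ) + 3) - 1 / (2 * (p.1 + p.2 + k : ℝ) + 5)))
      (oddHarmonic (k + 1) / (2 * k + 2)) := by
  refine hasSum_prod_of_nonneg (fun p => ?_) (fun q => ?_) (hasSum_one_div_odd_mul_odd k)
  · exact mul_nonneg (by positivity) (sub_nonneg.2 (by gcongr; norm_num))
  · rw [← one_div_mul_one_div]
    refine ((hasSum_one_div_sub_one_div_add (c := 2 * (q + k : ℝ) + 3) two_pos
      (by positivity)).mul_left _).congr_fun fun r => ?_
    ring_nf

theorem hasSum_one_div_odd_mul_sub (k : ℕ) :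
    HasSum (fun p : ℕ × ℕ => 1 / (2 * (p.1 : ℝ) + 1)
      * (1 / (2 * (p.1 + p.2 : ℝ) + 2) - 1 / (2 * (p.1 + p.2 + k : ℝ) + 3)))
      (∑ j ∈ range k, oddHarmonic (j + 1) / (2 * j + 2) + tValue1 2 / 6) := by
  induction k with
  | zero => simpa using hasSum_tValue1_two_div_six
  | succ k ih =>
    rw [sum_range_succ, add_right_comm]
    refine (ih.add (hasSum_oddHarmonic_increment k)).congr_fun fun p => ?_
    push_cast
    ring

/-! ### Partial fractions -/

/-- The term `1 / (l ^ u * ((l - m) * (l - n)))` of the partial fraction decomposition at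
`n = 2k + 1`, `m = n + 2q + 1`, `l = m + 2r + 1`, where `p = ((k, q), r)`. -/
noncomputable def outerPart (u : ℕ) (p : (ℕ × ℕ) × ℕ) : ℝ :=
  1 / ((2 * (p.1.1 + p.1.2 + p.2 : ℝ) + 3) ^ u
    * ((2 * (p.2 : ℝ) + 1) * (2 * (p.1.2 + p.2 : ℝ) + 2)))

/-- The term `1 / m ^ u * ((1 / (l - m) - 1 / l) / (m - n))` of the partial fraction decomposition,
in the coordinates of `outerPart`. -/
noncomputable def middlePart (u : ℕ) (p : (ℕ × ℕ) × ℕ) : ℝ :=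
  1 / (2 * (p.1.1 + p.1.2 : ℝ) + 2) ^ u
    * ((1 / (2 * (p.2 : ℝ) + 1) - 1 / (2 * (p.1.1 + p.1.2 + p.2 : ℝ) + 3))
      / (2 * (p.1.2 : ℝ) + 1))

/-- The term `1 / n ^ u * ((1 / (l - n) - 1 / l) / (m - n))` of the partial fraction decomposition,
in the coordinates of `outerPart`. -/
noncomputable def innerPart (u : ℕ) (p : (ℕ × ℕ) × ℕ) : ℝ :=
  1 / (2 * (p.1.1 : ℝ) + 1) ^ u
    * ((1 / (2 * (p.1.2 + p.2 : ℝ) + 2) - 1 / (2 * (p.1.1 + p.1.2 + p.2 : ℝ) + 3))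
      / (2 * (p.1.2 : ℝ) + 1))

theorem sum_one_div_eq_parts (v : ℕ) (p : (ℕ × ℕ) × ℕ) :
    ∑ a ∈ Icc 2 (v + 2), ∑ b ∈ Icc 1 (v + 4 - a - 1),
        1 / ((2 * (p.1.1 + p.1.2 + p.2 : ℝ) + 3) ^ a * (2 * (p.1.1 + p.1.2 : ℝ) + 2) ^ b
          * (2 * (p.1.1 : ℝ) + 1) ^ (v + 4 - a - b))
      = outerPart (v + 2) p - middlePart (v + 2) p + innerPart (v + 2) p := by
  obtain ⟨⟨k, q⟩, r⟩ := p
  have hlm : 2 * (k + q + r : ℝ) + 3 - (2 * (k + q) + 2) = 2 * r + 1 := by ring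
  have hln : 2 * (k + q + r : ℝ) + 3 - (2 * k + 1) = 2 * (q + r) + 2 := by ring
  have hmn : 2 * (k + q : ℝ) + 2 - (2 * k + 1) = 2 * q + 1 := by ring
  rw [sum_one_div_pow_mul_pow_mul_pow (by positivity) (by positivity) (by positivity)
    (sub_ne_zero.1 (hlm ▸ by positivity)) (sub_ne_zero.1 (hln ▸ by positivity))
    (sub_ne_zero.1 (hmn ▸ by positivity)), hlm, hln, hmn,
    outerPart, middlePart, innerPart]

theorem hasSum_oddHarmonic_sq {u : ℕ} (hu : 2 ≤ u) :
    HasSum (fun j : ℕ => oddHarmonic j ^ 2 / (2 * (j : ℝ)) ^ u)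
      (tValue2 u 2 / 4 + 2 * evenOddOddSum u) := by
  have hdiag := hasSum_sum_range (f := fun i j => 1 / ((2 * (i : ℝ)) ^ u * (2 * (j : ℝ) + 1) ^ 2))
    ((hasSum_tValue2 hu one_le_two).congr_fun fun p => by push_cast; ring)
  have hoff := hasSum_sum_range_sum_range (f := fun i j k =>
    1 / ((2 * (i : ℝ)) ^ u * (2 * (j : ℝ) + 1) * (2 * (k : ℝ) + 1)))
    ((hasSum_evenOddOddSum hu).congr_fun fun p => by push_cast; ring_nf)
  refine (hdiag.add (hoff.mul_left 2)).congr_fun fun i => ?_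
  simp only [oddHarmonic_sq, mul_assoc, ← one_div_mul_one_div ((2 * (i : ℝ)) ^ u), ← mul_sum]
  ring

theorem hasSum_oddHarmonic_sq_of_hasSum_middlePart {u : ℕ} {s : ℝ}
    (hs : HasSum (middlePart u) s) :
    HasSum (fun j : ℕ => oddHarmonic j ^ 2 / (2 * (j : ℝ)) ^ u) s := by
  have hfiber : HasSum (fun p : ℕ × ℕ => 1 / (2 * (p.1 + p.2 : ℝ) + 2) ^ u
      * (oddHarmonic (p.1 + p.2 + 1) / (2 * (p.2 : ℝ) + 1))) s :=
    hs.prod_fiberwise fun p => (((hasSum_one_div_sub_eq_oddHarmonic (p.1 + p.2 + 1)).div_const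
      _).mul_left _).congr_fun fun r => by rw [middlePart]; push_cast; ring_nf
  have hgroup := hasSum_sum_range
    (f := fun j i => oddHarmonic j / (2 * (j : ℝ)) ^ u * (1 / (2 * (i : ℝ) + 1)))
    (((Equiv.prodComm ℕ ℕ).hasSum_iff.2 hfiber).congr_fun fun p => by
      simp only [Function.comp_apply, Equiv.prodComm_apply, Prod.fst_swap, Prod.snd_swap]
      rw [add_comm p.2 p.1]
      push_cast
      ring)
  refine hgroup.congr_fun fun j => ?_
  rw [← mul_sum, ← oddHarmonic]
  ring

-- Reversing the order of the gaps fixes `l` and turns `l - m`, `l - n` into `n`, `m`.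
theorem hasSum_outerPart {u : ℕ} (hu : 2 ≤ u) : HasSum (outerPart u) (tValue3 u 1 1 / 8) := by
  have hinv : Function.Involutive fun p : (ℕ × ℕ) × ℕ => ((p.2, p.1.2), p.1.1) := fun _ => rfl
  refine (hinv.toPerm.hasSum_iff.2 (hasSum_tValue3 hu le_rfl le_rfl)).congr_fun fun p => ?_
  simp only [Function.comp_apply, Function.Involutive.coe_toPerm, outerPart]
  ring

theorem hasSum_sum_oddHarmonic_div {u : ℕ} (hu : 2 ≤ u) :
    HasSum (fun i : ℕ => 1 / (2 * (i : ℝ) + 1) ^ u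
      * ∑ j ∈ range i, oddHarmonic (j + 1) / (2 * j + 2)) (tValue3 u 1 1 / 8) := by
  have hgroup := hasSum_sum_range_sum_range (f := fun i j k =>
    1 / ((2 * (i : ℝ) - 1) ^ u * (2 * (j : ℝ)) * (2 * (k : ℝ) + 1)))
    ((hasSum_tValue3 hu le_rfl le_rfl).congr_fun fun p => by push_cast; ring_nf)
  have hshift := (hasSum_nat_add_iff' 1).2 hgroup
  simp only [range_one, sum_singleton, range_zero, sum_empty, sub_zero] at hshift
  refine hshift.congr_fun fun i => ?_
  rw [sum_range_succ', range_zero, sum_empty, add_zero, mul_sum]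
  refine sum_congr rfl fun j _ => ?_
  rw [oddHarmonic, sum_div, mul_sum]
  refine sum_congr rfl fun k _ => ?_
  rw [Nat.cast_add_one, Nat.cast_add_one, show 2 * ((i : ℝ) + 1) - 1 = 2 * i + 1 by ring]
  field_simp

theorem hasSum_innerPart {u : ℕ} (hu : 2 ≤ u) :
    HasSum (innerPart u) (tValue3 u 1 1 / 8 + tValue1 2 / 6 * (tValue1 u / 2)) := by
  rw [← (Equiv.prodAssoc ℕ ℕ ℕ).symm.hasSum_iff]
  refine hasSum_prod_of_nonneg (fun p => ?_) (fun k => ?_)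
    ((hasSum_sum_oddHarmonic_div hu).add ((hasSum_tValue1 hu).mul_left (tValue1 2 / 6)))
  · refine mul_nonneg (by positivity) (div_nonneg (sub_nonneg.2 ?_) (by positivity))
    exact one_div_le_one_div_of_le (by positivity) (by linarith [p.1.cast_nonneg (α := ℝ)])
  · rw [mul_comm (tValue1 2 / 6), ← mul_add]
    refine ((hasSum_one_div_odd_mul_sub k).mul_left _).congr_fun fun p => ?_
    simp only [Function.comp_apply, Equiv.prodAssoc_symm_apply, innerPart]
    ring_nf

theorem sum_tValue3_eq (v : ℕ) :
    ∑ a ∈ Icc 2 (v + 2), ∑ b ∈ Icc 1 (v + 4 - a - 1), tValue3 a b (v + 4 - a - b)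
      = 2 * tValue3 (v + 2) 1 1 + 2 / 3 * tValue1 2 * tValue1 (v + 2) - 2 * tValue2 (v + 2) 2
        - 16 * evenOddOddSum (v + 2) := by
  have hu : 2 ≤ v + 2 := Nat.le_add_left 2 v
  have hsum : HasSum _ (∑ a ∈ Icc 2 (v + 2), ∑ b ∈ Icc 1 (v + 4 - a - 1),
      tValue3 a b (v + 4 - a - b) / 8) :=
    hasSum_sum fun a ha => hasSum_sum fun b hb =>
      hasSum_tValue3 (mem_Icc.1 ha).1 (mem_Icc.1 hb).1 (by grind)
  simp only [sum_one_div_eq_parts, ← sum_div] at hsum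
  have hmid := hasSum_oddHarmonic_sq_of_hasSum_middlePart (u := v + 2)
    ((((hasSum_outerPart hu).add (hasSum_innerPart hu)).sub hsum).congr_fun fun p => by ring)
  linear_combination 8 * (hasSum_oddHarmonic_sq hu).unique hmid

/-- Sum formula for triple T-values: for `w ≥ 4`, with `u = w − 2`,
`∑_{a+b+c=w, a≥2} T(a,b,c)
  = (2/3) T(2) T(u) − 2 T(u,2) + 4(ζ(u,1̄,1) − ζ(ū,1,1) + ζ(ū,1,1̄) − ζ(u,1̄,1̄))`. -/
theorem sum_triple_T (w : ℕ) (hw : 4 ≤ w) :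
    ∑ a ∈ Finset.Icc 2 (w - 2), ∑ b ∈ Finset.Icc 1 (w - a - 1),
        tValue3 a b (w - a - b)
      = 2 / 3 * tValue1 2 * tValue1 (w - 2) - 2 * tValue2 (w - 2) 2
        + 4 * (eulerSum3 (w - 2) 1 1 1 (-1) 1 - eulerSum3 (w - 2) 1 1 (-1) 1 1
          + eulerSum3 (w - 2) 1 1 (-1) 1 (-1) - eulerSum3 (w - 2) 1 1 1 (-1) (-1)) := by
  obtain ⟨v, rfl⟩ := Nat.exists_eq_add_of_le' hw
  rw [show v + 4 - 2 = v + 2 by omega, sum_tValue3_eq, eulerSum3_combination_eq (by omega)]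
  ring
end

section
/- For every integer w ≥ 4, ∑_{a+b+c=w, a≥2, b,c≥1} ζ(a,b,c) = ζ(w), i.e., the sum of all admissible multiple zeta values of weight w and depth 3 equals ζ(w). -/
/-! This is the connected-sum method of Seki and Yamamoto, for indices of arbitrary depth `d + 1`.
For `0 ≤ x < 1` consider
`∑_{n₁ > ⋯ > n_{d+1} ≥ 1} 1 / (n₁ (n₁ - x) ⋯ (n_{d+1} - x))`.
Expanding each `1 / (n - x)` as a geometric series, the coefficient of `x ^ m` is the sum of all
admissible multiple zeta values of depth `d + 1` and weight `m + d + 2`.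
The connector `C(n, m) = (1 - x)_n (1 - x)_m / (1 - x)_{n + m}` satisfies
`C(n + 1, m) / (n + 1 - x) = (C(n, m) - C(n + 1, m)) / m`, so sums over `n` against it telescope.
Writing `1 / n₁ = ∑_m C(n₁, m) / (m - x)` and summing over `n₁`, …, `n_{d+1}` in turn, each
summation contributes a factor `1 / m`, which turns the series into
`∑_m 1 / (m ^ (d + 1) (m - x))`, whose coefficient of `x ^ m` is `ζ(m + d + 2)`. All terms are
nonnegative, so the interchanges of summation are free in `ℝ≥0∞`. -/

open Filter

open scoped ENNReal NNReal Topology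

section ExtendedSeries

theorem tsum_sum_range_eq_tsum_tsum (f : ℕ → ℕ → ℝ≥0∞) :
    ∑' p, ∑ q ∈ Finset.range p, f p q = ∑' q, ∑' j, f (q + 1 + j) q := by
  have extend_by_zero (p : ℕ) :
      ∑ q ∈ Finset.range p, f p q = ∑' q, if q < p then f p q else 0 := by
    rw [tsum_eq_sum (s := Finset.range p) fun q hq => if_neg (by simpa using hq)]
    exact Finset.sum_congr rfl fun q hq => by rw [if_pos (Finset.mem_range.1 hq)]
  simp_rw [extend_by_zero]
  rw [ENNReal.tsum_comm]
  refine tsum_congr fun q => ?_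
  rw [← (add_right_injective (q + 1)).tsum_eq]
  · exact tsum_congr fun j => if_pos (by lia)
  · intro p hp
    have hqp : q < p := by
      by_contra h
      simp [h] at hp
    exact ⟨p - (q + 1), by dsimp only; lia⟩

theorem tsum_mul_tsum_eq_tsum_fin_succ {d : ℕ} (f : ℕ → ℝ≥0∞) (g : (Fin d → ℕ) → ℝ≥0∞) :
    (∑' k, f k) * ∑' e, g e = ∑' e : Fin (d + 1) → ℕ, f (e 0) * g (Fin.tail e) := by
  rw [← (Fin.consEquiv fun _ => ℕ).tsum_eq, ENNReal.tsum_prod', ← ENNReal.tsum_mul_right]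
  refine tsum_congr fun k => ?_
  rw [← ENNReal.tsum_mul_left]
  rfl

theorem tsum_eq_tsum_sum_antidiagonalTuple (d : ℕ) (f : (Fin d → ℕ) → ℝ≥0∞) :
    ∑' e, f e = ∑' m, ∑ e ∈ Finset.Nat.antidiagonalTuple d m, f e := by
  rw [← (Finset.Nat.sigmaAntidiagonalTupleEquivTuple d).tsum_eq, ENNReal.tsum_sigma']
  exact tsum_congr fun m => Finset.tsum_subtype (Finset.Nat.antidiagonalTuple d m) f

theorem tsum_eq_of_eq_succ_add {u f : ℕ → ℝ≥0∞} (huf : ∀ n, u n = u (n + 1) + f n)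
    (hu : Tendsto u atTop (𝓝 0)) : ∑' n, f n = u 0 := by
  have partial_sum (N : ℕ) : u N + ∑ n ∈ Finset.range N, f n = u 0 := by
    induction N with
    | zero => simp
    | succ N ih => rw [Finset.sum_range_succ_comm, ← add_assoc, ← huf, ih]
  have hlim := hu.add (ENNReal.tendsto_nat_tsum f)
  simp_rw [partial_sum, zero_add] at hlim
  exact tendsto_nhds_unique hlim tendsto_const_nhds

end ExtendedSeries

section PowerSeries

theorem tsum_mul_pow_eq_zero_add (A : ℕ → ℝ≥0∞) (x : ℝ≥0∞) :
    ∑' n, A n * x ^ n = A 0 + x * ∑' n, A (n + 1) * x ^ n := by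
  rw [tsum_eq_zero_add' ENNReal.summable, ← ENNReal.tsum_mul_left, pow_zero, mul_one]
  exact congrArg _ (tsum_congr fun n => by ring)

theorem tsum_succ_mul_pow_ne_top {A : ℕ → ℝ≥0∞} {x : ℝ≥0∞} (hx : x ≠ 0)
    (h : ∑' n, A n * x ^ n ≠ ∞) : ∑' n, A (n + 1) * x ^ n ≠ ∞ := by
  rw [tsum_mul_pow_eq_zero_add] at h
  exact fun htop => h (by rw [htop, ENNReal.mul_top hx, add_top])

theorem tendsto_tsum_mul_pow_nhds_zero {A : ℕ → ℝ≥0∞} {y : ℝ≥0∞} (hy : y ≠ 0)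
    (hA : ∑' n, A n * y ^ n ≠ ∞) :
    Tendsto (fun x => ∑' n, A n * x ^ n) (𝓝 0) (𝓝 (A 0)) := by
  have hbound : Tendsto (fun x => A 0 + x * ∑' n, A (n + 1) * y ^ n) (𝓝 0) (𝓝 (A 0)) := by
    have hlinear := ENNReal.Tendsto.mul_const (tendsto_id (x := 𝓝 (0 : ℝ≥0∞)))
      (.inr (tsum_succ_mul_pow_ne_top hy hA))
    simpa only [zero_mul, add_zero, id_eq] using hlinear.const_add (A 0)
  refine tendsto_of_tendsto_of_tendsto_of_le_of_le' tendsto_const_nhds hbound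
    (.of_forall fun x => ?_) ?_
  · rw [tsum_mul_pow_eq_zero_add]
    exact le_self_add
  · filter_upwards [Iic_mem_nhds (pos_iff_ne_zero.2 hy)] with x hx
    rw [tsum_mul_pow_eq_zero_add]
    gcongr
    exact hx

theorem coeff_zero_eq_of_frequently_tsum_mul_pow_eq {A B : ℕ → ℝ≥0∞} {y : ℝ≥0∞} (hy : y ≠ 0)
    (hB : ∑' n, B n * y ^ n ≠ ∞)
    (hAB : ∃ᶠ x in 𝓝[≠] 0, ∑' n, A n * x ^ n = ∑' n, B n * x ^ n) : A 0 = B 0 := by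
  have hsmall : ∀ᶠ x in 𝓝[≠] (0 : ℝ≥0∞), x ≠ 0 ∧ x ≤ y :=
    eventually_mem_nhdsWithin.and <|
      eventually_nhdsWithin_of_eventually_nhds <| Iic_mem_nhds (pos_iff_ne_zero.2 hy)
  obtain ⟨x, hx, hx0, hxy⟩ := (hAB.and_eventually hsmall).exists
  have hA : ∑' n, A n * x ^ n ≠ ∞ := by
    refine ne_top_of_le_ne_top hB (hx.trans_le ?_)
    gcongr
  exact tendsto_nhds_unique_of_frequently_eq
    ((tendsto_tsum_mul_pow_nhds_zero hx0 hA).mono_left nhdsWithin_le_nhds)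
    ((tendsto_tsum_mul_pow_nhds_zero hy hB).mono_left nhdsWithin_le_nhds) hAB

theorem eq_of_frequently_tsum_mul_pow_eq {A B : ℕ → ℝ≥0∞} {y : ℝ≥0∞} (hy : y ≠ 0)
    (hB : ∑' n, B n * y ^ n ≠ ∞)
    (hAB : ∃ᶠ x in 𝓝[≠] 0, ∑' n, A n * x ^ n = ∑' n, B n * x ^ n) : A = B := by
  funext m
  induction m generalizing A B with
  | zero => exact coeff_zero_eq_of_frequently_tsum_mul_pow_eq hy hB hAB
  | succ _ ih =>
    have hB0 : B 0 ≠ ∞ := fun h => hB (by rw [tsum_mul_pow_eq_zero_add, h, top_add])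
    refine ih (A := fun n => A (n + 1)) (B := fun n => B (n + 1))
      (tsum_succ_mul_pow_ne_top hy hB) ?_
    have hfinite : ∀ᶠ x in 𝓝[≠] (0 : ℝ≥0∞), x ≠ 0 ∧ x ≠ ∞ :=
      eventually_mem_nhdsWithin.and <| eventually_nhdsWithin_of_eventually_nhds <|
        eventually_ne_nhds ENNReal.zero_ne_top
    refine (hAB.and_eventually hfinite).mono fun x ⟨hx, hx0, hxtop⟩ => ?_
    rwa [tsum_mul_pow_eq_zero_add A, tsum_mul_pow_eq_zero_add B,
      coeff_zero_eq_of_frequently_tsum_mul_pow_eq hy hB hAB, ENNReal.add_right_inj hB0,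
      ENNReal.mul_right_inj hx0 hxtop] at hx

end PowerSeries

section NestedSums

/-- The strictly nested sum `∑_{N > n₁ > ⋯ > n_d ≥ 0} f₁(n₁) ⋯ f_d(n_d)`: truncated multiple zeta
values and their generating functions are of this form. -/
def nestedSum {R : Type*} [CommSemiring R] : {d : ℕ} → (Fin d → ℕ → R) → ℕ → R
  | 0, _, _ => 1
  | _ + 1, f, N => ∑ n ∈ Finset.range N, f 0 n * nestedSum (Fin.tail f) n

/-- The infinite nested sum `∑_{n₁ > ⋯ > n_{d+1} ≥ 0} f₁(n₁) ⋯ f_{d+1}(n_{d+1})`, which always makes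
sense in `ℝ≥0∞`. -/
noncomputable def nestedTsum {d : ℕ} (f : Fin (d + 1) → ℕ → ℝ≥0∞) : ℝ≥0∞ :=
  ∑' n, f 0 n * nestedSum (Fin.tail f) n

theorem map_nestedSum {R S : Type*} [CommSemiring R] [CommSemiring S] (φ : R →+* S) {d : ℕ}
    (f : Fin d → ℕ → R) (N : ℕ) :
    φ (nestedSum f N) = nestedSum (fun i n => φ (f i n)) N := by
  induction d generalizing N with
  | zero => exact map_one φ
  | succ d ih =>
    simp only [nestedSum, map_sum, map_mul, ih]
    rfl

theorem nestedSum_const_mul {R : Type*} [CommSemiring R] {d : ℕ} (c : Fin d → R)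
    (f : Fin d → ℕ → R) (N : ℕ) :
    nestedSum (fun i n => c i * f i n) N = (∏ i, c i) * nestedSum f N := by
  induction d generalizing N with
  | zero => simp [nestedSum]
  | succ d ih =>
    rw [nestedSum, nestedSum, Fin.prod_univ_succ, Finset.mul_sum]
    refine Finset.sum_congr rfl fun n _ => ?_
    rw [mul_mul_mul_comm, ← ih]
    rfl

theorem nestedTsum_const_mul {d : ℕ} (c : Fin (d + 1) → ℝ≥0∞) (f : Fin (d + 1) → ℕ → ℝ≥0∞) :
    nestedTsum (fun i n => c i * f i n) = (∏ i, c i) * nestedTsum f := by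
  rw [nestedTsum, nestedTsum, Fin.prod_univ_succ, ← ENNReal.tsum_mul_left]
  refine tsum_congr fun n => ?_
  rw [mul_mul_mul_comm, ← nestedSum_const_mul]
  rfl

theorem nestedSum_tsum {d : ℕ} (f : Fin d → ℕ → ℕ → ℝ≥0∞) (N : ℕ) :
    nestedSum (fun i n => ∑' k, f i k n) N =
      ∑' e : Fin d → ℕ, nestedSum (fun i => f i (e i)) N := by
  induction d generalizing N with
  | zero => simp [nestedSum]
  | succ d ih =>
    simp_rw [nestedSum]
    rw [Summable.tsum_finsetSum fun _ _ => ENNReal.summable]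
    refine Finset.sum_congr rfl fun n _ => ?_
    exact (congrArg _ (ih (Fin.tail f) n)).trans (tsum_mul_tsum_eq_tsum_fin_succ _ _)

theorem nestedTsum_tsum {d : ℕ} (f : Fin (d + 1) → ℕ → ℕ → ℝ≥0∞) :
    nestedTsum (fun i n => ∑' k, f i k n) =
      ∑' e : Fin (d + 1) → ℕ, nestedTsum fun i => f i (e i) := by
  simp_rw [nestedTsum]
  rw [ENNReal.tsum_comm]
  refine tsum_congr fun n => ?_
  exact (congrArg _ (nestedSum_tsum (Fin.tail f) n)).trans (tsum_mul_tsum_eq_tsum_fin_succ _ _)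

theorem toReal_nestedSum_coe {d : ℕ} (f : Fin d → ℕ → ℝ≥0) (N : ℕ) :
    (nestedSum (fun i n => (f i n : ℝ≥0∞)) N).toReal = nestedSum (fun i n => (f i n : ℝ)) N :=
  (congrArg ENNReal.toReal (map_nestedSum ENNReal.ofNNRealHom f N).symm).trans
    (map_nestedSum NNReal.toRealHom f N)

theorem tendsto_nestedSum_nestedTsum {d : ℕ} (f : Fin (d + 1) → ℕ → ℝ≥0∞) :
    Tendsto (nestedSum f) atTop (𝓝 (nestedTsum f)) :=
  ENNReal.tendsto_nat_tsum _

end NestedSums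

section Connector

/-- The shifted reciprocal `1 / (a + n)`. With `a = 1` it runs through the terms of the zeta series;
with `a = 1 - x` it is the generating function of the powers of these terms. -/
noncomputable def shiftedInv (a : ℝ≥0) (n : ℕ) : ℝ≥0 :=
  (a + n)⁻¹

/-- The connector `(a)_n (a)_m / (a)_{n + m}` of Seki and Yamamoto, where `(a)_n` is the rising
factorial. -/
noncomputable def connector (a : ℝ≥0) (n m : ℕ) : ℝ≥0 :=
  (ascPochhammer ℝ≥0 n).eval a * (ascPochhammer ℝ≥0 m).eval a / (ascPochhammer ℝ≥0 (n + m)).eval a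

theorem connector_comm (a : ℝ≥0) (n m : ℕ) : connector a n m = connector a m n := by
  rw [connector, connector, mul_comm, add_comm]

variable {a : ℝ≥0}

theorem connector_zero_left (ha : 0 < a) (m : ℕ) : connector a 0 m = 1 := by
  rw [connector, ascPochhammer_zero, Polynomial.eval_one, one_mul, zero_add,
    div_self (ascPochhammer_pos m a ha).ne']

theorem connector_succ_left (a : ℝ≥0) (n m : ℕ) :
    connector a (n + 1) m = connector a n m * ((a + n) / (a + n + m)) := by
  rw [connector, connector, add_right_comm, ascPochhammer_succ_eval, ascPochhammer_succ_eval,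
    mul_right_comm, mul_div_mul_comm, Nat.cast_add, add_assoc]

theorem connector_eq_succ_add (ha : 0 < a) (n m : ℕ) :
    connector a n m =
      connector a (n + 1) m + m * (connector a (n + 1) m * shiftedInv a n) := by
  rw [connector_succ_left, shiftedInv]
  field_simp

theorem connector_le_one (ha : 0 < a) (n m : ℕ) : connector a n m ≤ 1 := by
  rw [← connector_zero_left ha m]
  exact antitone_nat_of_succ_le (f := (connector a · m))
    (fun k => (connector_eq_succ_add ha k m).symm ▸ le_self_add) n.zero_le

theorem tendsto_connector_succ (ha : 0 < a) (m : ℕ) :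
    Tendsto (fun n => connector a n (m + 1)) atTop (𝓝 0) := by
  have hbound : ∀ᶠ n : ℕ in atTop, connector a n (m + 1) ≤ (a + m) / n := by
    filter_upwards [eventually_gt_atTop 0] with n hn
    rw [connector_comm, connector_succ_left]
    calc connector a m n * ((a + m) / (a + m + n))
        ≤ (a + m) / (a + m + n) := mul_le_of_le_one_left' (connector_le_one ha m n)
      _ ≤ (a + m) / n := by gcongr; exact le_add_self
  exact tendsto_of_tendsto_of_tendsto_of_le_of_le' tendsto_const_nhds
    (tendsto_const_div_atTop_nhds_zero_nat (a + (m : ℝ≥0))) (.of_forall fun n => zero_le) hbound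

theorem tsum_connector_mul_shiftedInv (ha : 0 < a) (k m : ℕ) :
    ∑' j, (connector a (k + j + 1) (m + 1) * shiftedInv a (k + j) : ℝ≥0∞) =
      connector a k (m + 1) * shiftedInv 1 m := by
  let u (j : ℕ) : ℝ≥0 := connector a (k + j) (m + 1) * shiftedInv 1 m
  have htelescope (j : ℕ) :
      u j = u (j + 1) + connector a (k + j + 1) (m + 1) * shiftedInv a (k + j) := by
    simp only [u, shiftedInv, ← add_assoc]
    rw [connector_eq_succ_add ha (k + j) (m + 1), shiftedInv]
    push_cast
    field_simp
    ring
  have hu : Tendsto u atTop (𝓝 0) := by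
    simpa only [zero_mul] using
      (((tendsto_connector_succ ha m).comp (tendsto_add_atTop_nat k)).congr
        fun j => congrArg (connector a · (m + 1)) (add_comm j k)).mul_const (shiftedInv 1 m)
  simpa [u] using tsum_eq_of_eq_succ_add (u := fun j => (u j : ℝ≥0∞))
    (f := fun j => connector a (k + j + 1) (m + 1) * shiftedInv a (k + j))
    (fun j => mod_cast htelescope j) (ENNReal.tendsto_coe.2 hu)

end Connector

section Transport

variable {a : ℝ≥0}

theorem shiftedInv_one_eq_tsum_connector (ha : 0 < a) (p : ℕ) :
    (shiftedInv 1 p : ℝ≥0∞) = ∑' m, (connector a (p + 1) (m + 1) * shiftedInv a m : ℝ≥0∞) := by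
  have h := tsum_connector_mul_shiftedInv ha 0 p
  simp only [zero_add, connector_zero_left ha, ENNReal.coe_one, one_mul] at h
  simp_rw [← h, connector_comm]

theorem tsum_connector_mul_shiftedInv_mul_nestedSum (ha : 0 < a) (d m : ℕ) :
    ∑' p, (connector a (p + 1) (m + 1) * shiftedInv a p *
        nestedSum (fun (_ : Fin d) q => (shiftedInv a q : ℝ≥0∞)) p) =
      (shiftedInv 1 m : ℝ≥0∞) ^ (d + 1) := by
  induction d with
  | zero =>
    simpa [nestedSum, connector_zero_left ha] using tsum_connector_mul_shiftedInv ha 0 m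
  | succ d ih =>
    let I (q : ℕ) : ℝ≥0∞ := nestedSum (fun (_ : Fin d) n => (shiftedInv a n : ℝ≥0∞)) q
    calc
      _ = ∑' p, ∑ q ∈ Finset.range p, (connector a (p + 1) (m + 1) * shiftedInv a p *
            (shiftedInv a q * I q) : ℝ≥0∞) :=
        tsum_congr fun p => Finset.mul_sum ..
      _ = ∑' q, (connector a (q + 1) (m + 1) * shiftedInv 1 m * (shiftedInv a q * I q) : ℝ≥0∞) := by
        rw [tsum_sum_range_eq_tsum_tsum]
        simp_rw [ENNReal.tsum_mul_right, tsum_connector_mul_shiftedInv ha]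
      _ = shiftedInv 1 m *
            ∑' q, (connector a (q + 1) (m + 1) * shiftedInv a q * I q : ℝ≥0∞) := by
        rw [← ENNReal.tsum_mul_left]
        exact tsum_congr fun q => by ring
      _ = _ := by rw [ih, pow_succ' _ (d + 1)]

theorem tsum_shiftedInv_mul_nestedSum (ha : 0 < a) (d : ℕ) :
    ∑' p, (shiftedInv a p * shiftedInv 1 p *
        nestedSum (fun (_ : Fin d) q => (shiftedInv a q : ℝ≥0∞)) p) =
      ∑' m, (shiftedInv a m * shiftedInv 1 m ^ (d + 1) : ℝ≥0∞) := by
  simp_rw [shiftedInv_one_eq_tsum_connector ha, ← ENNReal.tsum_mul_left, ← ENNReal.tsum_mul_right]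
  rw [ENNReal.tsum_comm]
  refine tsum_congr fun m => ?_
  rw [← shiftedInv_one_eq_tsum_connector ha, ← tsum_connector_mul_shiftedInv_mul_nestedSum ha,
    ← ENNReal.tsum_mul_left]
  exact tsum_congr fun p => by ring

end Transport

section MultipleZetaValues

/-- The multiple zeta value `ζ(s₁, …, s_{d+1})`, equal to `∞` when the series diverges. The
summation variables are shifted by one, so that they start at `0`. -/
noncomputable def multiZeta {d : ℕ} (s : Fin (d + 1) → ℕ) : ℝ≥0∞ :=
  nestedTsum fun i n => (shiftedInv 1 n : ℝ≥0∞) ^ s i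

/-- The index `(2, 1, …, 1)`: the admissible indices of depth `d + 1` are those of the form
`e + minIndex d`. -/
def minIndex (d : ℕ) : Fin (d + 1) → ℕ :=
  Fin.cons 2 1

theorem multiZeta_singleton (w : ℕ) : multiZeta ![w] = ∑' n, (shiftedInv 1 n : ℝ≥0∞) ^ w := by
  simp [multiZeta, nestedTsum, nestedSum]

theorem multiZeta_singleton_ne_top {w : ℕ} (hw : 1 < w) : multiZeta ![w] ≠ ∞ := by
  have hs : Summable fun n : ℕ => shiftedInv 1 n ^ w := by
    rw [← NNReal.summable_coe]
    simpa [shiftedInv, add_comm] using (summable_nat_add_iff 1).2 (Real.summable_nat_pow_inv.2 hw)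
  rw [multiZeta_singleton]
  exact_mod_cast ENNReal.tsum_coe_ne_top_iff_summable.2 hs

theorem multiZeta_singleton_anti : Antitone fun w : ℕ => multiZeta ![w] := by
  intro v w hvw
  simp only [multiZeta_singleton]
  refine ENNReal.tsum_le_tsum fun n => pow_le_pow_right_of_le_one' ?_ hvw
  have hle : shiftedInv 1 n ≤ 1 := inv_le_one_of_one_le₀ le_self_add
  exact_mod_cast hle

variable {x a : ℝ≥0}

theorem tsum_pow_mul_shiftedInv_one_pow (hxa : x + a = 1) (ha : 0 < a) (b n : ℕ) :
    ∑' k, (x ^ k * shiftedInv 1 n ^ (k + (b + 1)) : ℝ≥0∞) =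
      shiftedInv a n * shiftedInv 1 n ^ b := by
  have hsub : 1 - x * shiftedInv 1 n = shiftedInv 1 n * (a + n) := by
    refine tsub_eq_of_eq_add (Eq.symm ?_)
    calc
      _ = shiftedInv 1 n * ((x + a) + n) := by ring
      _ = 1 := by rw [hxa, shiftedInv, inv_mul_cancel₀ (by positivity)]
  have hne : shiftedInv 1 n * (a + n) ≠ 0 := by
    unfold shiftedInv
    positivity
  calc
    _ = ∑' k, (shiftedInv 1 n ^ (b + 1) * (x * shiftedInv 1 n) ^ k : ℝ≥0∞) :=
      tsum_congr fun k => by ring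
    _ = shiftedInv 1 n ^ (b + 1) * ((1 - x * shiftedInv 1 n : ℝ≥0) : ℝ≥0∞)⁻¹ := by
      rw [ENNReal.tsum_mul_left, ENNReal.tsum_geometric]
      push_cast
      rfl
    _ = _ := by
      rw [hsub, ← ENNReal.coe_inv hne]
      norm_cast
      rw [mul_inv, pow_succ, shiftedInv, shiftedInv]
      field_simp

theorem tsum_pow_mul_multiZeta {d : ℕ} (b : Fin (d + 1) → ℕ) (x : ℝ≥0∞) :
    ∑' e : Fin (d + 1) → ℕ, x ^ (∑ i, e i) * multiZeta (e + b) =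
      nestedTsum fun i n => ∑' k, x ^ k * (shiftedInv 1 n : ℝ≥0∞) ^ (k + b i) := by
  rw [nestedTsum_tsum]
  refine tsum_congr fun e => ?_
  rw [nestedTsum_const_mul fun i => x ^ e i, Finset.prod_pow_eq_pow_sum]
  rfl

theorem tsum_sum_multiZeta_mul_pow (hxa : x + a = 1) (ha : 0 < a) (d : ℕ) :
    ∑' m, (∑ e ∈ Finset.Nat.antidiagonalTuple (d + 1) m, multiZeta (e + minIndex d)) *
        (x : ℝ≥0∞) ^ m =
      ∑' p, (shiftedInv a p * shiftedInv 1 p *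
        nestedSum (fun (_ : Fin d) q => (shiftedInv a q : ℝ≥0∞)) p) := by
  calc
    _ = ∑' m, ∑ e ∈ Finset.Nat.antidiagonalTuple (d + 1) m,
          (x : ℝ≥0∞) ^ (∑ i, e i) * multiZeta (e + minIndex d) := by
      refine tsum_congr fun m => ?_
      rw [Finset.sum_mul]
      refine Finset.sum_congr rfl fun e he => ?_
      rw [Finset.Nat.mem_antidiagonalTuple.1 he, mul_comm]
    _ = nestedTsum fun i n => ∑' k, (x ^ k * shiftedInv 1 n ^ (k + minIndex d i) : ℝ≥0∞) := by
      rw [← tsum_eq_tsum_sum_antidiagonalTuple, tsum_pow_mul_multiZeta]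
    _ = _ := by
      have hhead (n : ℕ) := tsum_pow_mul_shiftedInv_one_pow hxa ha 1 n
      have htail (n : ℕ) := tsum_pow_mul_shiftedInv_one_pow hxa ha 0 n
      simp only [pow_one, pow_zero, mul_one, zero_add, one_add_one_eq_two] at hhead htail
      unfold nestedTsum Fin.tail
      simp only [minIndex, Fin.cons_zero, Fin.cons_succ, Pi.one_apply, hhead, htail]

theorem tsum_multiZeta_singleton_mul_pow (hxa : x + a = 1) (ha : 0 < a) (d : ℕ) :
    ∑' m, multiZeta ![m + d + 2] * (x : ℝ≥0∞) ^ m =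
      ∑' n, (shiftedInv a n * shiftedInv 1 n ^ (d + 1) : ℝ≥0∞) := by
  simp_rw [multiZeta_singleton, ← tsum_pow_mul_shiftedInv_one_pow hxa ha, ← ENNReal.tsum_mul_right]
  rw [ENNReal.tsum_comm]
  exact tsum_congr fun n => tsum_congr fun k => by ring

theorem tsum_multiZeta_singleton_mul_pow_ne_top {x : ℝ≥0∞} (hx : x < 1) (d : ℕ) :
    ∑' m, multiZeta ![m + d + 2] * x ^ m ≠ ∞ := by
  have hle : ∑' m, multiZeta ![m + d + 2] * x ^ m ≤ multiZeta ![2] * (1 - x)⁻¹ := by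
    rw [← ENNReal.tsum_geometric, ← ENNReal.tsum_mul_left]
    gcongr with m
    exact multiZeta_singleton_anti (Nat.le_add_left 2 (m + d))
  exact ne_top_of_le_ne_top (ENNReal.mul_ne_top (multiZeta_singleton_ne_top one_lt_two)
    (ENNReal.inv_ne_top.2 (tsub_pos_of_lt hx).ne')) hle

theorem sum_triple_zeta_general (d m : ℕ) :
    ∑ e ∈ Finset.Nat.antidiagonalTuple (d + 1) m, multiZeta (e + minIndex d) =
      multiZeta ![m + d + 2] := by
  have hgen : ∀ᶠ x in 𝓝[≠] (0 : ℝ≥0∞),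
      ∑' m, (∑ e ∈ Finset.Nat.antidiagonalTuple (d + 1) m, multiZeta (e + minIndex d)) * x ^ m =
        ∑' m, multiZeta ![m + d + 2] * x ^ m := by
    filter_upwards [eventually_nhdsWithin_of_eventually_nhds (Iio_mem_nhds one_pos)] with x hx
    lift x to ℝ≥0 using (hx.trans ENNReal.one_lt_top).ne
    have hx1 : x < 1 := mod_cast hx
    have hxa : x + (1 - x) = 1 := add_tsub_cancel_of_le hx1.le
    have ha : 0 < 1 - x := tsub_pos_of_lt hx1
    rw [tsum_sum_multiZeta_mul_pow hxa ha, tsum_shiftedInv_mul_nestedSum ha,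
      tsum_multiZeta_singleton_mul_pow hxa ha]
  exact congrFun (eq_of_frequently_tsum_mul_pow_eq (ENNReal.inv_ne_zero.2 ENNReal.ofNat_ne_top)
    (tsum_multiZeta_singleton_mul_pow_ne_top ENNReal.one_half_lt_one d) hgen.frequently) m

theorem multiZeta_add_minIndex_ne_top {d : ℕ} (e : Fin (d + 1) → ℕ) :
    multiZeta (e + minIndex d) ≠ ∞ := by
  have hsum := sum_triple_zeta_general d (∑ i, e i) ▸ multiZeta_singleton_ne_top (by lia)
  exact ENNReal.sum_ne_top.1 hsum e (Finset.Nat.mem_antidiagonalTuple.2 rfl)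

theorem tendsto_nestedSum_multiZeta {d : ℕ} {s : Fin (d + 1) → ℕ} (hs : multiZeta s ≠ ∞) :
    Tendsto (nestedSum fun i n => (shiftedInv 1 n : ℝ) ^ s i) atTop (𝓝 (multiZeta s).toReal) := by
  refine ((ENNReal.tendsto_toReal hs).comp (tendsto_nestedSum_nestedTsum _)).congr fun N => ?_
  exact_mod_cast toReal_nestedSum_coe (fun i n => shiftedInv 1 n ^ s i) N

end MultipleZetaValues

section EulerSums

theorem eulerSum1_one_eq_toReal_multiZeta {w : ℕ} (hw : 1 < w) :
    eulerSum1 w 1 = (multiZeta ![w]).toReal := by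
  have hlim := tendsto_nestedSum_multiZeta (multiZeta_singleton_ne_top hw)
  refine (hlim.congr fun N => ?_).limUnder_eq
  simp [nestedSum, shiftedInv, ← Finset.Ico_add_one_right_eq_Icc, Finset.sum_Ico_eq_sum_range]

theorem eulerSum3_one_eq_toReal_multiZeta {a b c : ℕ} (h : multiZeta ![a, b, c] ≠ ∞) :
    eulerSum3 a b c 1 1 1 = (multiZeta ![a, b, c]).toReal := by
  refine ((tendsto_nestedSum_multiZeta h).congr fun N => ?_).limUnder_eq
  simp [nestedSum, shiftedInv, Fin.tail, ← Finset.Ico_add_one_right_eq_Icc,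
    Finset.sum_Ico_eq_sum_range, Finset.mul_sum, mul_assoc, mul_comm]

theorem sum_Icc_Icc_eq_sum_antidiagonalTuple {M : Type*} [AddCommMonoid M] (f : ℕ → ℕ → ℕ → M)
    (m : ℕ) :
    ∑ a ∈ Finset.Icc 2 (m + 2), ∑ b ∈ Finset.Icc 1 (m + 4 - a - 1), f a b (m + 4 - a - b) =
      ∑ e ∈ Finset.Nat.antidiagonalTuple 3 m, f (e 0 + 2) (e 1 + 1) (e 2 + 1) := by
  rw [Finset.sum_sigma']
  refine Finset.sum_bij' (fun p _ => ![p.1 - 2, p.2 - 1, m + 4 - p.1 - p.2 - 1])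
    (fun e _ => ⟨e 0 + 2, e 1 + 1⟩) ?_ ?_ ?_ ?_ ?_
  · intro p hp
    simp only [Finset.mem_sigma, Finset.mem_Icc] at hp
    simp only [Finset.Nat.mem_antidiagonalTuple, Fin.sum_univ_three, Matrix.cons_val]
    lia
  · intro e he
    simp only [Finset.Nat.mem_antidiagonalTuple, Fin.sum_univ_three] at he
    simp only [Finset.mem_sigma, Finset.mem_Icc]
    lia
  · rintro ⟨a, b⟩ hp
    simp only [Finset.mem_sigma, Finset.mem_Icc] at hp
    simp only [Matrix.cons_val, Sigma.mk.injEq, heq_eq_eq]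
    lia
  · intro e he
    simp only [Finset.Nat.mem_antidiagonalTuple, Fin.sum_univ_three] at he
    ext i
    fin_cases i <;> simp only [Fin.reduceFinMk, Fin.zero_eta, Matrix.cons_val] <;> lia
  · rintro ⟨a, b⟩ hp
    simp only [Finset.mem_sigma, Finset.mem_Icc] at hp
    simp only [Matrix.cons_val]
    congr 1 <;> lia

theorem sum_eulerSum3_eq_toReal_sum_multiZeta (m : ℕ) :
    ∑ a ∈ Finset.Icc 2 (m + 2), ∑ b ∈ Finset.Icc 1 (m + 4 - a - 1),
        eulerSum3 a b (m + 4 - a - b) 1 1 1 =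
      (∑ e ∈ Finset.Nat.antidiagonalTuple 3 m, multiZeta (e + minIndex 2)).toReal := by
  rw [sum_Icc_Icc_eq_sum_antidiagonalTuple fun a b c => eulerSum3 a b c 1 1 1,
    ENNReal.toReal_sum fun e _ => multiZeta_add_minIndex_ne_top e]
  refine Finset.sum_congr rfl fun e _ => ?_
  have hindex : e + minIndex 2 = ![e 0 + 2, e 1 + 1, e 2 + 1] := by
    ext i
    fin_cases i <;> rfl
  rw [hindex]
  exact eulerSum3_one_eq_toReal_multiZeta (hindex ▸ multiZeta_add_minIndex_ne_top e)

end EulerSums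

/-- Sum formula for depth-3 MZVs: for `w ≥ 4`, `∑_{a+b+c=w, a≥2} ζ(a,b,c) = ζ(w)`. -/
theorem sum_triple_zeta (w : ℕ) (hw : 4 ≤ w) :
    ∑ a ∈ Finset.Icc 2 (w - 2), ∑ b ∈ Finset.Icc 1 (w - a - 1),
        eulerSum3 a b (w - a - b) 1 1 1
      = eulerSum1 w 1 := by
  obtain ⟨m, rfl⟩ : ∃ m, w = m + 4 := ⟨w - 4, by lia⟩
  exact (sum_eulerSum3_eq_toReal_sum_multiZeta m).trans <|
    (congrArg ENNReal.toReal (sum_triple_zeta_general 2 m)).trans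
      (eulerSum1_one_eq_toReal_multiZeta (by lia)).symm
end
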